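/- arXiv:2105.07684 — 2 statements merged into one kernel-verified Lean document; each statement's English description precedes it below -/
import Mathlib

section
/- (Zador's Theorem.) Let p > 0, η > 0, and let X be an ℝ^d-valued random vector with E|X|^{p+η} < ∞ whose law P decomposes as P = h·λ_d + ν, where h ≥ 0 is measurable, λ_d is the Lebesgue measure on ℝ^d, and ν is singular with respect to λ_d. Then lim_{N→∞} N^{1/d} e_{p,N}(X) = J̃_{p,d} · ( ∫_{ℝ^d} h(x)^{d/(d+p)} dx )^{(d+p)/(dp)}, where J̃_{p,d} = inf_{N≥1} N^{1/d} e_{p,N}(U([0,1]^d)) ∈ (0,∞) and U([0,1]^d) denotes the uniform distribution on the unit hypercube [0,1]^d. -/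
open MeasureTheory Real Filter

noncomputable section

abbrev Euc (d : ℕ) : Type := EuclideanSpace ℝ (Fin d)

/-- L^p quantization error of a probability measure `μ` on ℝ^d w.r.t. a grid `Γ`. -/
def quantErrM (p : ℝ) {d : ℕ} (μ : Measure (Euc d)) (Γ : Finset (Euc d)) : ℝ :=
  (∫ x, (Metric.infDist x (Γ : Set (Euc d))) ^ p ∂μ) ^ (1 / p)

/-- Optimal L^p quantization error of `μ` at level `N`. -/
def optQuantErrM (p : ℝ) (N : ℕ) {d : ℕ} (μ : Measure (Euc d)) : ℝ :=
  sInf {e | ∃ Γ : Finset (Euc d), Γ.Nonempty ∧ Γ.card ≤ N ∧ e = quantErrM p μ Γ}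

/-- The uniform distribution on the unit hypercube `[0,1]^d`. -/
def unifCube (d : ℕ) : Measure (Euc d) :=
  (volume : Measure (Euc d)).restrict {x : Euc d | ∀ i, x i ∈ Set.Icc (0 : ℝ) 1}

/-- Zador's constant `J̃_{p,d} = inf_{N ≥ 1} N^{1/d} e_{p,N}(U([0,1]^d))`. -/
def zadorConst (p : ℝ) (d : ℕ) : ℝ :=
  sInf {e | ∃ N : ℕ, 1 ≤ N ∧ e = (N : ℝ) ^ (1 / (d : ℝ)) * optQuantErrM p N (unifCube d)}

/-- The `p`-th power of the optimal `L^p` quantization error, as an extended nonnegative number. -/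
def quantPow (p : ℝ) (N : ℕ) {d : ℕ} (μ : Measure (Euc d)) : ENNReal :=
  ⨅ Γ : {Γ : Finset (Euc d) // Γ.card ≤ N},
    ∫⁻ x, Metric.infEDist x ((Γ : Finset (Euc d)) : Set (Euc d)) ^ p ∂μ

section Basic

variable {d : ℕ} {p : ℝ}

lemma quantPow_le {N : ℕ} (μ : Measure (Euc d)) {Γ : Finset (Euc d)} (hΓ : Γ.card ≤ N) :
    quantPow p N μ ≤ ∫⁻ x, Metric.infEDist x (Γ : Set (Euc d)) ^ p ∂μ :=
  iInf_le (fun Γ : {Γ : Finset (Euc d) // Γ.card ≤ N} =>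
    ∫⁻ x, Metric.infEDist x ((Γ : Finset (Euc d)) : Set (Euc d)) ^ p ∂μ) ⟨Γ, hΓ⟩

lemma le_quantPow {N : ℕ} {μ : Measure (Euc d)} {c : ENNReal}
    (hc : ∀ Γ : Finset (Euc d), Γ.card ≤ N →
      c ≤ ∫⁻ x, Metric.infEDist x (Γ : Set (Euc d)) ^ p ∂μ) : c ≤ quantPow p N μ :=
  le_iInf fun Γ => hc Γ.1 Γ.2

lemma exists_lt_of_quantPow_lt {N : ℕ} {μ : Measure (Euc d)} {c : ENNReal}
    (hc : quantPow p N μ < c) : ∃ Γ : Finset (Euc d), Γ.card ≤ N ∧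
      ∫⁻ x, Metric.infEDist x (Γ : Set (Euc d)) ^ p ∂μ < c := by
  obtain ⟨Γ, hΓ⟩ := iInf_lt_iff.1 hc
  exact ⟨Γ.1, Γ.2, hΓ⟩

lemma quantPow_anti {M N : ℕ} (hMN : M ≤ N) (μ : Measure (Euc d)) :
    quantPow p N μ ≤ quantPow p M μ :=
  le_quantPow fun _ hΓ => quantPow_le μ (hΓ.trans hMN)

lemma quantPow_mono {μ ν : Measure (Euc d)} (hμν : μ ≤ ν) (N : ℕ) :
    quantPow p N μ ≤ quantPow p N ν :=
  le_quantPow fun _ hΓ => (quantPow_le μ hΓ).trans (lintegral_mono' hμν le_rfl)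

lemma quantPow_zero (N : ℕ) : quantPow p N (0 : Measure (Euc d)) = 0 := by
  refine le_antisymm ((quantPow_le (Γ := ∅) 0 (by simp)).trans ?_) zero_le
  simp

lemma quantPow_smul {c : ENNReal} (hc : c ≠ 0) (hc' : c ≠ ⊤) (N : ℕ) (μ : Measure (Euc d)) :
    quantPow p N (c • μ) = c * quantPow p N μ := by
  simp only [quantPow, lintegral_smul_measure, smul_eq_mul]
  rw [ENNReal.mul_iInf_of_ne hc hc']

lemma quantPow_add_le (hp : 0 ≤ p) (M N : ℕ) (μ ν : Measure (Euc d)) :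
    quantPow p (M + N) (μ + ν) ≤ quantPow p M μ + quantPow p N ν := by
  classical
  refine ENNReal.le_iInf_add_iInf fun Γ₁ Γ₂ => ?_
  refine (quantPow_le (Γ := Γ₁.1 ∪ Γ₂.1) _
    ((Finset.card_union_le _ _).trans (add_le_add Γ₁.2 Γ₂.2))).trans ?_
  rw [lintegral_add_measure]
  refine add_le_add (lintegral_mono fun x => ?_) (lintegral_mono fun x => ?_) <;>
    refine ENNReal.rpow_le_rpow (Metric.infEDist_anti ?_) hp <;> simp

lemma quantPow_sum_le (hp : 0 ≤ p) {ι : Type*} (S : Finset ι) (n : ℕ)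
    (μ : ι → Measure (Euc d)) :
    quantPow p (S.card * n) (∑ i ∈ S, μ i) ≤ ∑ i ∈ S, quantPow p n (μ i) := by
  classical
  induction S using Finset.induction_on with
  | empty => simp [quantPow_zero]
  | insert a s ha ih =>
    rw [Finset.sum_insert ha, Finset.sum_insert ha, Finset.card_insert_of_notMem ha, add_mul,
      one_mul, add_comm (s.card * n)]
    exact (quantPow_add_le hp _ _ _ _).trans (add_le_add_right ih _)

end Basic

/-- `limsup N ^ r * quantPow p N μ ≤ a ^ (1 + r)`. -/
def QuantUB (p r : ℝ) {d : ℕ} (μ : Measure (Euc d)) (a : ℝ) : Prop :=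
  ∀ b, a < b → ∀ᶠ N : ℕ in atTop,
    quantPow p N μ ≤ ENNReal.ofReal (b ^ (1 + r) * (N : ℝ) ^ (-r))

/-- `a ^ (1 + r) ≤ liminf N ^ r * quantPow p N μ`. -/
def QuantLB (p r : ℝ) {d : ℕ} (μ : Measure (Euc d)) (a : ℝ) : Prop :=
  ∀ b, 0 < b → b < a → ∀ᶠ N : ℕ in atTop,
    ENNReal.ofReal (b ^ (1 + r) * (N : ℝ) ^ (-r)) ≤ quantPow p N μ

section Bounds

variable {d : ℕ} {p r : ℝ} {μ ν : Measure (Euc d)} {a b : ℝ}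

lemma QuantUB.mono_measure (h : QuantUB p r ν a) (hμν : μ ≤ ν) : QuantUB p r μ a :=
  fun b hb => (h b hb).mono fun N hN => (quantPow_mono hμν N).trans hN

lemma QuantLB.mono_measure (h : QuantLB p r μ a) (hμν : μ ≤ ν) : QuantLB p r ν a :=
  fun b hb hb' => (h b hb hb').mono fun N hN => hN.trans (quantPow_mono hμν N)

lemma QuantUB.of_forall_lt (h : ∀ b, a < b → QuantUB p r μ b) : QuantUB p r μ a := by
  intro b hb
  obtain ⟨c, hac, hcb⟩ := exists_between hb
  exact h c hac b hcb

lemma QuantLB.of_forall_lt (h : ∀ b, b < a → QuantLB p r μ b) : QuantLB p r μ a := by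
  intro b hb hba
  obtain ⟨c, hbc, hca⟩ := exists_between hba
  exact h c hca b hb hbc

lemma QuantUB.mono (h : QuantUB p r μ a) (hab : a ≤ b) : QuantUB p r μ b :=
  fun c hc => h c (hab.trans_lt hc)

lemma QuantLB.mono (h : QuantLB p r μ a) (hab : b ≤ a) : QuantLB p r μ b :=
  fun c hc hc' => h c hc (hc'.trans_le hab)

lemma quantUB_zero : QuantUB p r (0 : Measure (Euc d)) a := by
  intro _ _
  filter_upwards with N
  rw [quantPow_zero]; exact zero_le

lemma quantLB_of_nonpos (ha : a ≤ 0) : QuantLB p r μ a :=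
  fun _ hb hb' => absurd (hb.trans hb') (not_lt.2 ha)

lemma QuantLB.le_of_quantUB (hr : 0 < r) (ha : QuantLB p r μ a) (hb : QuantUB p r μ b)
    (hb0 : 0 ≤ b) : a ≤ b := by
  by_contra! hlt
  obtain ⟨c, hbc, hca⟩ := exists_between hlt
  obtain ⟨e, hbe, hec⟩ := exists_between hbc
  obtain ⟨N, h1, h2, h3⟩ := ((ha c (hb0.trans_lt hbc) hca).and
    ((hb e hbe).and (eventually_gt_atTop 0))).exists
  have hN : (0 : ℝ) < (N : ℝ) ^ (-r) := rpow_pos_of_pos (by exact_mod_cast h3) _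
  have hc0 : (0 : ℝ) < c ^ (1 + r) := rpow_pos_of_pos (hb0.trans_lt hbc) _
  have := (ENNReal.ofReal_le_ofReal_iff (by
    have : 0 ≤ e := hb0.trans hbe.le
    positivity)).1 (h1.trans h2)
  have h4 := le_of_mul_le_mul_right this hN
  exact absurd h4 (not_le.2 (rpow_lt_rpow (hb0.trans hbe.le) hec (by linarith)))

lemma eventually_ceil_mul_le {s t : ℝ} (hst : s < t) : ∀ᶠ N : ℕ in atTop,
    s * (N : ℝ) + 2 ≤ t * (N : ℝ) := by
  have h : Tendsto (fun N : ℕ => (t - s) * (N : ℝ)) atTop atTop :=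
    tendsto_natCast_atTop_atTop.const_mul_atTop (sub_pos.2 hst)
  filter_upwards [h.eventually_ge_atTop 2] with N hN
  linarith

lemma rpow_mul_eq_of_pos {a c N : ℝ} (ha : 0 < a) (hc : 0 < c) (hN : 0 ≤ N) :
    a ^ (1 + r) * (a / c * N) ^ (-r) = a * c ^ r * N ^ (-r) := by
  rw [mul_rpow (by positivity) hN, div_rpow ha.le hc.le, rpow_add ha, rpow_one, rpow_neg ha.le,
    rpow_neg hc.le]
  have := (rpow_pos_of_pos ha r).ne'
  have := (rpow_pos_of_pos hc r).ne'
  field_simp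

lemma tendsto_ceil_mul {t : ℝ} (ht : 0 < t) :
    Tendsto (fun N : ℕ => ⌈t * (N : ℝ)⌉₊) atTop atTop :=
  tendsto_nat_ceil_atTop.comp (tendsto_natCast_atTop_atTop.const_mul_atTop ht)

lemma QuantUB.add (hp : 0 ≤ p) (hr : 0 < r) (ha0 : 0 ≤ a) (hb0 : 0 ≤ b)
    (ha : QuantUB p r μ a) (hb : QuantUB p r ν b) : QuantUB p r (μ + ν) (a + b) := by
  intro c hc
  set δ := (c - (a + b)) / 3 with hδ
  have hδ0 : 0 < δ := by rw [hδ]; linarith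
  have hc0 : 0 < c := by linarith
  have ha' : 0 < a + δ := by linarith
  have hb' : 0 < b + δ := by linarith
  have hlt : (a + δ) / c + (b + δ) / c < 1 := by
    rw [← add_div, div_lt_one hc0]; linarith
  filter_upwards [(tendsto_ceil_mul (div_pos ha' hc0)).eventually (ha (a + δ) (by linarith)),
    (tendsto_ceil_mul (div_pos hb' hc0)).eventually (hb (b + δ) (by linarith)),
    eventually_ceil_mul_le hlt, eventually_gt_atTop 0] with N h1 h2 h3 h4
  have hN : (0 : ℝ) < N := by exact_mod_cast h4
  have hle : ⌈(a + δ) / c * (N : ℝ)⌉₊ + ⌈(b + δ) / c * (N : ℝ)⌉₊ ≤ N := by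
    have e1 := (Nat.ceil_lt_add_one (a := (a + δ) / c * (N : ℝ)) (by positivity)).le
    have e2 := (Nat.ceil_lt_add_one (a := (b + δ) / c * (N : ℝ)) (by positivity)).le
    have : ((⌈(a + δ) / c * (N : ℝ)⌉₊ + ⌈(b + δ) / c * (N : ℝ)⌉₊ : ℕ) : ℝ) ≤ N := by
      push_cast; linarith
    exact_mod_cast this
  refine (quantPow_anti hle _).trans ((quantPow_add_le hp _ _ _ _).trans
    ((add_le_add h1 h2).trans ?_))
  rw [← ENNReal.ofReal_add (by positivity) (by positivity)]
  refine ENNReal.ofReal_le_ofReal ?_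
  have key : ∀ x : ℝ, 0 < x → x ^ (1 + r) * ((⌈x / c * (N : ℝ)⌉₊ : ℕ) : ℝ) ^ (-r)
      ≤ x * c ^ r * (N : ℝ) ^ (-r) := by
    intro x hx
    rw [← rpow_mul_eq_of_pos hx hc0 hN.le]
    exact mul_le_mul_of_nonneg_left
      (rpow_le_rpow_of_nonpos (by positivity) (Nat.le_ceil _) (by linarith)) (by positivity)
  refine (add_le_add (key _ ha') (key _ hb')).trans ?_
  rw [rpow_add hc0, rpow_one, ← add_mul, ← add_mul]
  gcongr
  linarith

lemma QuantLB.of_add (hp : 0 ≤ p) (hr : 0 < r) (hb0 : 0 ≤ b)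
    (hab : QuantLB p r (μ + ν) (a + b)) (hb : QuantUB p r ν b) : QuantLB p r μ a := by
  intro c hc hca
  set δ := (a - c) / 4 with hδ
  have hδ0 : 0 < δ := by rw [hδ]; linarith
  set b' := b + δ with hb'
  have hb'0 : 0 < b' := by linarith
  set e := c + b' + δ with he
  have he0 : 0 < e := by linarith
  have hlt : 1 + b' / c < e / c := by
    rw [lt_div_iff₀ hc, add_mul, one_mul, div_mul_cancel₀ _ hc.ne']; linarith
  have hlim : Tendsto (fun N : ℕ => N + ⌈b' / c * (N : ℝ)⌉₊) atTop atTop :=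
    tendsto_atTop_mono (fun N => Nat.le_add_right N _) tendsto_id
  filter_upwards [hlim.eventually (hab e he0 (by linarith)),
    (tendsto_ceil_mul (div_pos hb'0 hc)).eventually (hb b' (by linarith)),
    eventually_ceil_mul_le hlt, eventually_gt_atTop 0] with N h1 h2 h3 h4
  have hN : (0 : ℝ) < N := by exact_mod_cast h4
  have h5 := h1.trans ((quantPow_add_le hp _ _ _ _).trans (add_le_add_right h2 _))
  have h6 : b' ^ (1 + r) * ((⌈b' / c * (N : ℝ)⌉₊ : ℕ) : ℝ) ^ (-r)
      ≤ b' * c ^ r * (N : ℝ) ^ (-r) := by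
    rw [← rpow_mul_eq_of_pos hb'0 hc hN.le]
    exact mul_le_mul_of_nonneg_left
      (rpow_le_rpow_of_nonpos (by positivity) (Nat.le_ceil _) (by linarith)) (by positivity)
  have h7 : e * c ^ r * (N : ℝ) ^ (-r)
      ≤ e ^ (1 + r) * ((N + ⌈b' / c * (N : ℝ)⌉₊ : ℕ) : ℝ) ^ (-r) := by
    rw [← rpow_mul_eq_of_pos he0 hc hN.le]
    refine mul_le_mul_of_nonneg_left
      (rpow_le_rpow_of_nonpos (by positivity) ?_ (by linarith)) (by positivity)
    have e1 := (Nat.ceil_lt_add_one (a := b' / c * (N : ℝ)) (by positivity)).le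
    push_cast; linarith
  have h8 : ENNReal.ofReal (c ^ (1 + r) * (N : ℝ) ^ (-r))
      + ENNReal.ofReal (b' ^ (1 + r) * ((⌈b' / c * (N : ℝ)⌉₊ : ℕ) : ℝ) ^ (-r))
      ≤ ENNReal.ofReal (e ^ (1 + r) * ((N + ⌈b' / c * (N : ℝ)⌉₊ : ℕ) : ℝ) ^ (-r)) := by
    rw [← ENNReal.ofReal_add (by positivity) (by positivity)]
    refine ENNReal.ofReal_le_ofReal ((add_le_add_right h6 _).trans (le_trans ?_ h7))
    rw [rpow_add hc, rpow_one, ← add_mul, ← add_mul]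
    gcongr
    linarith
  exact (ENNReal.add_le_add_iff_right ENNReal.ofReal_ne_top).1 (h8.trans h5)

lemma QuantUB.smul (hr : 0 < r) (ha0 : 0 ≤ a) (ha : QuantUB p r μ a) (c : NNReal) :
    QuantUB p r (c • μ) ((c : ℝ) ^ (1 / (1 + r)) * a) := by
  rcases eq_or_ne c 0 with rfl | hc
  · rw [zero_smul]
    exact quantUB_zero
  intro b hb
  have hc0 : (0 : ℝ) < c := by positivity
  have hq : (0 : ℝ) < (c : ℝ) ^ (1 / (1 + r)) := by positivity
  have hb0 : 0 < b := lt_of_le_of_lt (by positivity) hb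
  filter_upwards [ha (b / (c : ℝ) ^ (1 / (1 + r))) (by rwa [lt_div_iff₀ hq, mul_comm])] with N hN
  have : quantPow p N (c • μ) = (c : ENNReal) * quantPow p N μ :=
    quantPow_smul (by simpa using hc) ENNReal.coe_ne_top N μ
  rw [this]
  refine (mul_le_mul_right hN _).trans (le_of_eq ?_)
  rw [← ENNReal.ofReal_coe_nnreal, ← ENNReal.ofReal_mul hc0.le, div_rpow hb0.le hq.le,
    ← rpow_mul hc0.le, one_div, inv_mul_cancel₀ (by linarith), rpow_one]
  congr 1
  field_simp

lemma QuantLB.smul (hr : 0 < r) (ha : QuantLB p r μ a) (c : NNReal) :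
    QuantLB p r (c • μ) ((c : ℝ) ^ (1 / (1 + r)) * a) := by
  rcases eq_or_ne c 0 with rfl | hc
  · refine quantLB_of_nonpos ?_
    rw [NNReal.coe_zero, zero_rpow (by positivity), zero_mul]
  intro b hb0 hb
  have hc0 : (0 : ℝ) < c := by positivity
  have hq : (0 : ℝ) < (c : ℝ) ^ (1 / (1 + r)) := by positivity
  filter_upwards [ha (b / (c : ℝ) ^ (1 / (1 + r))) (by positivity)
    (by rwa [div_lt_iff₀ hq, mul_comm])] with N hN
  have : quantPow p N (c • μ) = (c : ENNReal) * quantPow p N μ :=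
    quantPow_smul (by simpa using hc) ENNReal.coe_ne_top N μ
  rw [this]
  refine le_trans (le_of_eq ?_) (mul_le_mul_right hN _)
  rw [← ENNReal.ofReal_coe_nnreal, ← ENNReal.ofReal_mul hc0.le, div_rpow hb0.le hq.le,
    ← rpow_mul hc0.le, one_div, inv_mul_cancel₀ (by linarith), rpow_one]
  congr 1
  field_simp

end Bounds

section Grid

variable {d : ℕ} {p : ℝ}

/-- The half-open cube of side `l` with lower corner `l • z`. -/
def gridCube (l : ℝ) (z : Fin d → ℤ) : Set (Euc d) :=
  {x | ∀ i, x i ∈ Set.Ico (l * z i) (l * (z i + 1))}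

lemma mem_gridCube_floor {l : ℝ} (hl : 0 < l) (x : Euc d) :
    x ∈ gridCube l (fun i => ⌊x i / l⌋) := by
  intro i
  constructor
  · rw [mul_comm, ← le_div_iff₀ hl]; exact Int.floor_le _
  · rw [mul_comm, ← div_lt_iff₀ hl]; exact Int.lt_floor_add_one _

lemma eq_floor_of_mem_gridCube {l : ℝ} (hl : 0 < l) {x : Euc d} {z : Fin d → ℤ}
    (hx : x ∈ gridCube l z) : z = fun i => ⌊x i / l⌋ := by
  funext i
  refine (Int.floor_eq_iff.2 ⟨?_, ?_⟩).symm
  · rw [le_div_iff₀ hl, mul_comm]; exact (hx i).1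
  · rw [div_lt_iff₀ hl, mul_comm]; exact (hx i).2

lemma gridCube_eq_preimage (l : ℝ) (z : Fin d → ℤ) :
    gridCube l z = (WithLp.ofLp : Euc d → (Fin d → ℝ)) ⁻¹'
      (Set.univ.pi fun i => Set.Ico (l * z i) (l * (z i + 1))) := by
  ext x; simp [gridCube]

lemma measurableSet_gridCube (l : ℝ) (z : Fin d → ℤ) : MeasurableSet (gridCube l z) := by
  rw [gridCube_eq_preimage]
  exact (PiLp.volume_preserving_ofLp (Fin d)).measurable
    (MeasurableSet.univ_pi fun _ => measurableSet_Ico)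

lemma volume_gridCube {l : ℝ} (hl : 0 ≤ l) (z : Fin d → ℤ) :
    volume (gridCube l z) = ENNReal.ofReal (l ^ d) := by
  rw [gridCube_eq_preimage, (PiLp.volume_preserving_ofLp (Fin d)).measure_preimage
    (MeasurableSet.univ_pi fun _ => measurableSet_Ico).nullMeasurableSet, Real.volume_pi_Ico]
  have : ∀ i, l * ((z i : ℝ) + 1) - l * z i = l := fun i => by ring
  simp [this, ENNReal.ofReal_pow hl]

lemma dist_le_of_mem_gridCube {l : ℝ} (hl : 0 ≤ l) {z : Fin d → ℤ} {x y : Euc d}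
    (hx : x ∈ gridCube l z) (hy : y ∈ gridCube l z) : dist x y ≤ √d * l := by
  rw [EuclideanSpace.dist_eq]
  have : ∑ i, dist (x.ofLp i) (y.ofLp i) ^ 2 ≤ d * l ^ 2 := by
    refine (Finset.sum_le_card_nsmul _ _ (l ^ 2) fun i _ => ?_).trans (by simp)
    have hdist : dist (x.ofLp i) (y.ofLp i) ≤ l := by
      rw [Real.dist_eq, abs_le]
      obtain ⟨h1, h2⟩ := hx i
      obtain ⟨h3, h4⟩ := hy i
      constructor <;> linarith
    exact pow_le_pow_left₀ dist_nonneg hdist 2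
  refine (Real.sqrt_le_sqrt this).trans ?_
  rw [Real.sqrt_mul (by positivity), Real.sqrt_sq hl]

lemma card_mul_pow_le_volume {l : ℝ} (hl : 0 < l) {K : Set (Euc d)} (F : Finset (Fin d → ℤ))
    (hF : ∀ z ∈ F, (gridCube l z ∩ K).Nonempty) :
    ENNReal.ofReal (F.card * l ^ d) ≤ volume (Metric.cthickening (√d * l) K) := by
  have h1 : volume (⋃ z ∈ F, gridCube l z) = ENNReal.ofReal (F.card * l ^ d) := by
    rw [measure_biUnion_finset]
    · simp [volume_gridCube hl.le, ENNReal.ofReal_mul]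
    · intro z _ z' _ hzz'
      refine Set.disjoint_left.2 fun x hx hx' => hzz' ?_
      rw [eq_floor_of_mem_gridCube hl hx, eq_floor_of_mem_gridCube hl hx']
    · exact fun z _ => measurableSet_gridCube l z
  rw [← h1]
  refine measure_mono (Set.iUnion₂_subset fun z hz x hx => ?_)
  obtain ⟨y, hy, hyK⟩ := hF z hz
  exact Metric.mem_cthickening_of_dist_le x y _ K hyK (dist_le_of_mem_gridCube hl.le hx hy)

lemma exists_gridCube_cover {K : Set (Euc d)} (hK : IsCompact K) {v : ℝ}
    (hv : (volume K).toReal < v) :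
    ∀ᶠ l : ℝ in nhdsWithin 0 (Set.Ioi 0), ∃ S : Finset (Fin d → ℤ),
      K ⊆ (⋃ z ∈ S, gridCube l z) ∧ S.card * l ^ d ≤ v := by
  have hv0 : 0 < v := ENNReal.toReal_nonneg.trans_lt hv
  have hKv : volume K < ENNReal.ofReal v :=
    (ENNReal.lt_ofReal_iff_toReal_lt hK.measure_lt_top.ne).2 hv
  have hlim : Tendsto (fun l : ℝ => √d * l) (nhdsWithin 0 (Set.Ioi 0)) (nhds 0) := by
    have : Tendsto (fun l : ℝ => √d * l) (nhds 0) (nhds (√d * 0)) :=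
      (continuous_const.mul continuous_id).tendsto 0
    rw [mul_zero] at this
    exact this.mono_left nhdsWithin_le_nhds
  filter_upwards [((tendsto_measure_cthickening_of_isCompact (μ := volume) hK).comp
    hlim).eventually (gt_mem_nhds hKv), self_mem_nhdsWithin] with l hl hl0
  replace hl0 : 0 < l := hl0
  set S : Set (Fin d → ℤ) := {z | (gridCube l z ∩ K).Nonempty} with hS
  have hcard : ∀ F : Finset (Fin d → ℤ), (F : Set (Fin d → ℤ)) ⊆ S → F.card * l ^ d ≤ v := by
    intro F hF
    have := (card_mul_pow_le_volume hl0 F (fun z hz => hF hz)).trans hl.le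
    exact (ENNReal.ofReal_le_ofReal_iff hv0.le).1 this
  have hfin : S.Finite := by
    by_contra hinf
    obtain ⟨n, hn⟩ := exists_nat_gt (v / l ^ d)
    obtain ⟨F, hF, hFn⟩ := Set.Infinite.exists_subset_card_eq hinf n
    have := hcard F hF
    rw [hFn] at this
    rw [div_lt_iff₀ (by positivity)] at hn
    linarith
  refine ⟨hfin.toFinset, fun x hx => ?_, hcard _ (by simp)⟩
  simp only [Set.mem_iUnion, Set.Finite.mem_toFinset]
  exact ⟨_, ⟨x, mem_gridCube_floor hl0 x, hx⟩, mem_gridCube_floor hl0 x⟩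

lemma infEDist_smul_add_le {l : ℝ} (hl : 0 < l) (v x : Euc d) (Γ : Finset (Euc d))
    [DecidableEq (Euc d)] :
    Metric.infEDist (l • x + v) ((Γ.image fun y => l • y + v : Finset (Euc d)) : Set (Euc d))
      ≤ ENNReal.ofReal l * Metric.infEDist x (Γ : Set (Euc d)) := by
  rcases Γ.eq_empty_or_nonempty with rfl | hne
  · simp [hl]
  obtain ⟨y, hy, hxy⟩ := Γ.finite_toSet.isCompact.exists_infEDist_eq_edist hne x
  rw [hxy]
  refine (Metric.infEDist_le_edist_of_mem (y := l • y + v) ?_).trans (le_of_eq ?_)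
  · simpa using ⟨y, hy, rfl⟩
  · rw [edist_add_right, edist_smul₀, ENNReal.smul_def, smul_eq_mul]
    congr 1
    rw [ENNReal.ofReal, Real.nnnorm_of_nonneg hl.le]
    congr 1
    ext; simp [hl.le]

lemma map_volume_smul_add {l : ℝ} (hl : 0 < l) (v : Euc d) :
    (volume : Measure (Euc d)) =
      ENNReal.ofReal (l ^ d) • Measure.map (fun x => l • x + v) volume := by
  have h1 : Measure.map (fun x : Euc d => l • x + v) volume
      = Measure.map (fun x => x + v) (Measure.map (fun x => l • x) volume) := by
    rw [Measure.map_map (by fun_prop) (by fun_prop)]; rfl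
  rw [h1, Measure.map_addHaar_smul _ hl.ne', Measure.map_smul, map_add_right_eq_self, smul_smul,
    finrank_euclideanSpace_fin, abs_of_pos (by positivity), ← ENNReal.ofReal_mul (by positivity),
    mul_inv_cancel₀ (by positivity), ENNReal.ofReal_one, one_smul]

lemma quantPow_restrict_le_of_mapsTo (hp : 0 ≤ p) {l : ℝ} (hl : 0 < l) (v : Euc d)
    {A B : Set (Euc d)} (hA : MeasurableSet A) (hAB : ∀ x, l • x + v ∈ A → x ∈ B) (N : ℕ) :
    quantPow p N (volume.restrict A)
      ≤ ENNReal.ofReal (l ^ ((d : ℝ) + p)) * quantPow p N (volume.restrict B) := by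
  classical
  have hc : ENNReal.ofReal (l ^ ((d : ℝ) + p)) ≠ 0 := by
    simpa using rpow_pos_of_pos hl _
  rw [quantPow, quantPow, ENNReal.mul_iInf_of_ne hc ENNReal.ofReal_ne_top]
  refine le_iInf fun Γ => (quantPow_le (Γ := Γ.1.image fun y => l • y + v) _
    (Finset.card_image_le.trans Γ.2)).trans ?_
  set Γ' := Γ.1.image fun y => l • y + v
  have hm : Measurable fun x : Euc d => l • x + v := by fun_prop
  have hmf : Measurable fun x : Euc d => Metric.infEDist x (Γ' : Set (Euc d)) ^ p :=
    measurable_infEDist.pow_const p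
  calc ∫⁻ x in A, Metric.infEDist x (Γ' : Set (Euc d)) ^ p
      = ENNReal.ofReal (l ^ d) * ∫⁻ x in (fun x => l • x + v) ⁻¹' A,
          Metric.infEDist (l • x + v) (Γ' : Set (Euc d)) ^ p := by
        conv_lhs => rw [map_volume_smul_add hl v]
        rw [Measure.restrict_smul, lintegral_smul_measure, Measure.restrict_map hm hA,
          lintegral_map hmf hm, smul_eq_mul]
    _ ≤ ENNReal.ofReal (l ^ d) * ∫⁻ x in B,
          ENNReal.ofReal (l ^ p) * Metric.infEDist x (Γ.1 : Set (Euc d)) ^ p := by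
        gcongr 1
        refine (lintegral_mono_set (fun x hx => hAB x hx)).trans (lintegral_mono fun x => ?_)
        refine (ENNReal.rpow_le_rpow (infEDist_smul_add_le hl v x Γ.1) hp).trans (le_of_eq ?_)
        rw [ENNReal.mul_rpow_of_nonneg _ _ hp, ENNReal.ofReal_rpow_of_pos hl]
    _ = _ := by
        rw [lintegral_const_mul _ (measurable_infEDist.pow_const p), ← mul_assoc,
          ← ENNReal.ofReal_mul (by positivity), rpow_add hl, rpow_natCast]

lemma unitCube_eq_preimage : {x : Euc d | ∀ i, x i ∈ Set.Icc (0 : ℝ) 1} =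
    (WithLp.ofLp : Euc d → (Fin d → ℝ)) ⁻¹' (Set.univ.pi fun _ => Set.Icc 0 1) := by
  ext x; simp only [Set.mem_ofPred_eq, Set.mem_preimage, Set.mem_univ_pi]

lemma measurableSet_unitCube : MeasurableSet {x : Euc d | ∀ i, x i ∈ Set.Icc (0 : ℝ) 1} := by
  rw [unitCube_eq_preimage]
  exact (PiLp.volume_preserving_ofLp (Fin d)).measurable
    (MeasurableSet.univ_pi fun _ => measurableSet_Icc)

lemma volume_unitCube : volume {x : Euc d | ∀ i, x i ∈ Set.Icc (0 : ℝ) 1} = 1 := by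
  rw [unitCube_eq_preimage, (PiLp.volume_preserving_ofLp (Fin d)).measure_preimage
    (MeasurableSet.univ_pi fun _ => measurableSet_Icc).nullMeasurableSet, volume_pi_pi]
  simp only [Real.volume_Icc, sub_zero, ENNReal.ofReal_one, Finset.prod_const_one]

lemma quantPow_gridCube_le (hp : 0 ≤ p) {l : ℝ} (hl : 0 < l) (z : Fin d → ℤ) (N : ℕ) :
    quantPow p N (volume.restrict (gridCube l z))
      ≤ ENNReal.ofReal (l ^ ((d : ℝ) + p)) * quantPow p N (unifCube d) := by
  refine quantPow_restrict_le_of_mapsTo hp hl (WithLp.toLp 2 fun i => l * z i)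
    (B := {x : Euc d | ∀ i, x i ∈ Set.Icc (0 : ℝ) 1})
    (measurableSet_gridCube l z) (fun x hx i => ?_) N
  obtain ⟨h1, h2⟩ := hx i
  simp only [PiLp.add_apply, PiLp.smul_apply, smul_eq_mul] at h1 h2
  constructor
  · nlinarith
  · nlinarith

end Grid

section Covering

variable {d : ℕ} {p : ℝ}

lemma tendsto_div_rpow_nhdsWithin {v : ℝ} (hv : 0 < v) (hd : 1 ≤ d) :
    Tendsto (fun N : ℕ => (v / (N : ℝ)) ^ (1 / (d : ℝ))) atTop
      (nhdsWithin 0 (Set.Ioi 0)) := by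
  have hd0 : (0 : ℝ) < d := by exact_mod_cast hd
  refine tendsto_nhdsWithin_iff.2 ⟨?_, ?_⟩
  · have h1 := (tendsto_const_div_atTop_nhds_zero_nat v).rpow_const (p := 1 / (d : ℝ))
      (Or.inr (by positivity))
    rwa [zero_rpow (by positivity)] at h1
  · filter_upwards [eventually_gt_atTop 0] with N hN
    have : (0 : ℝ) < N := by exact_mod_cast hN
    exact rpow_pos_of_pos (by positivity) _

lemma exists_finset_net (hd : 1 ≤ d) {K : Set (Euc d)} (hK : IsCompact K) {v : ℝ}
    (hv : (volume K).toReal < v) :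
    ∀ᶠ N : ℕ in atTop, ∃ Γ : Finset (Euc d), Γ.card ≤ N ∧
      ∀ x ∈ K, ∃ g ∈ Γ, dist x g ≤ √d * (v / N) ^ (1 / (d : ℝ)) := by
  classical
  have hv0 : 0 < v := ENNReal.toReal_nonneg.trans_lt hv
  have hd0 : (d : ℝ) ≠ 0 := by positivity
  filter_upwards [(tendsto_div_rpow_nhdsWithin hv0 hd).eventually (exists_gridCube_cover hK hv),
    eventually_gt_atTop 0] with N hS hN
  obtain ⟨S, hKS, hcard⟩ := hS
  have hN0 : (0 : ℝ) < N := by exact_mod_cast hN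
  have hl : 0 < (v / (N : ℝ)) ^ (1 / (d : ℝ)) := by positivity
  rw [← rpow_natCast, ← rpow_mul (by positivity), one_div, inv_mul_cancel₀ hd0, rpow_one] at hcard
  refine ⟨S.image fun z => WithLp.toLp 2 fun i => (v / (N : ℝ)) ^ (1 / (d : ℝ)) * z i,
    Finset.card_image_le.trans ?_, fun x hx => ?_⟩
  · have : (S.card : ℝ) ≤ N := by
      have := mul_le_mul_of_nonneg_right hcard hN0.le
      field_simp at this
      exact this
    exact_mod_cast this
  · obtain ⟨z, hz, hxz⟩ := Set.mem_iUnion₂.1 (hKS hx)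
    refine ⟨_, Finset.mem_image_of_mem _ hz, dist_le_of_mem_gridCube hl.le hxz fun i => ?_⟩
    simp only [Set.left_mem_Ico]
    nlinarith

lemma quantUB_volume_restrict_of_le (hd : 1 ≤ d) (hp : 0 < p) {K : Set (Euc d)}
    (hK : IsCompact K) {c : ℝ} (hc : 0 < c) {n : ℕ} (hn : 1 ≤ n)
    (hcn : quantPow p n (unifCube d) ≤ ENNReal.ofReal (c * (n : ℝ) ^ (-(p / d)))) :
    QuantUB p (p / d) (volume.restrict K) (c ^ (1 / (1 + p / d)) * (volume K).toReal) := by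
  intro b hb
  have hd0 : (0 : ℝ) < d := by exact_mod_cast hd
  have hn0 : (0 : ℝ) < n := by exact_mod_cast hn
  set r := p / d with hr
  have hr0 : 0 < r := by positivity
  set q := c ^ (1 / (1 + r)) with hq
  have hq0 : 0 < q := by positivity
  have hqc : q ^ (1 + r) = c := by
    rw [hq, ← rpow_mul hc.le, one_div, inv_mul_cancel₀ (by positivity), rpow_one]
  obtain ⟨v, hv, hvb⟩ : ∃ v, (volume K).toReal < v ∧ v < b / q :=
    exists_between (by rwa [lt_div_iff₀ hq0, mul_comm])
  have hv0 : 0 < v := ENNReal.toReal_nonneg.trans_lt hv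
  filter_upwards [(tendsto_div_rpow_nhdsWithin (mul_pos hv0 hn0) hd).eventually
    (exists_gridCube_cover hK hv), eventually_gt_atTop 0] with N hS hN
  obtain ⟨S, hKS, hcard⟩ := hS
  have hN0 : (0 : ℝ) < N := by exact_mod_cast hN
  set l := (v * n / (N : ℝ)) ^ (1 / (d : ℝ)) with hl
  have hl0 : 0 < l := by positivity
  have hld : l ^ d = v * n / N := by
    rw [← rpow_natCast, hl, ← rpow_mul (by positivity), one_div, inv_mul_cancel₀ hd0.ne', rpow_one]
  have hlp : l ^ p = (v * n / N) ^ r := by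
    rw [hl, ← rpow_mul (by positivity)]; congr 1; rw [hr]; ring
  have hSN : S.card * n ≤ N := by
    have : (S.card : ℝ) * n ≤ N := by
      rw [hld] at hcard
      have := mul_le_mul_of_nonneg_right hcard hN0.le
      field_simp at this
      exact this
    exact_mod_cast this
  have hmeas : volume.restrict K ≤ ∑ z ∈ S, (volume : Measure (Euc d)).restrict (gridCube l z) := by
    refine (Measure.restrict_mono hKS le_rfl).trans ?_
    refine Measure.le_iff.2 fun s hs => ?_
    rw [Measure.finsetSum_apply, Measure.restrict_apply hs, Set.inter_iUnion₂]
    refine (measure_biUnion_finset_le _ _).trans (Finset.sum_le_sum fun z _ => ?_)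
    rw [Measure.restrict_apply hs]
  refine (quantPow_anti hSN _).trans ((quantPow_mono hmeas _).trans
    ((quantPow_sum_le hp.le S n _).trans ?_))
  have h1 : ∀ z ∈ S, quantPow p n (volume.restrict (gridCube l z))
      ≤ ENNReal.ofReal (l ^ ((d : ℝ) + p) * (c * (n : ℝ) ^ (-r))) := by
    intro z _
    rw [ENNReal.ofReal_mul (by positivity)]
    exact (quantPow_gridCube_le hp.le hl0 z n).trans (mul_le_mul_right hcn _)
  refine (Finset.sum_le_card_nsmul _ _ _ h1).trans ?_
  rw [← ENNReal.ofReal_nsmul, nsmul_eq_mul]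
  refine ENNReal.ofReal_le_ofReal ?_
  have h2 : (v * n / N : ℝ) ^ r = v ^ r * (n : ℝ) ^ r * (N : ℝ) ^ (-r) := by
    rw [div_rpow (by positivity) (by positivity), mul_rpow (by positivity) (by positivity),
      rpow_neg hN0.le]; rfl
  have h3 : (n : ℝ) ^ r * (n : ℝ) ^ (-r) = 1 := by
    rw [← rpow_add hn0, add_neg_cancel, rpow_zero]
  calc S.card * (l ^ ((d : ℝ) + p) * (c * (n : ℝ) ^ (-r)))
      = (S.card * l ^ d) * (l ^ p * (c * (n : ℝ) ^ (-r))) := by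
        rw [rpow_add hl0, rpow_natCast]; ring
    _ ≤ v * (l ^ p * (c * (n : ℝ) ^ (-r))) := by gcongr
    _ = (q * v) ^ (1 + r) * (N : ℝ) ^ (-r) * ((n : ℝ) ^ r * (n : ℝ) ^ (-r)) := by
        rw [hlp, h2, mul_rpow hq0.le hv0.le, hqc, rpow_add hv0, rpow_one]; ring
    _ ≤ b ^ (1 + r) * (N : ℝ) ^ (-r) := by
        rw [h3, mul_one]
        gcongr
        rw [lt_div_iff₀ hq0] at hvb
        linarith

lemma quantPow_le_of_forall_dist_le (hp : 0 ≤ p) {N : ℕ} {μ : Measure (Euc d)}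
    {Γ : Finset (Euc d)} (hΓ : Γ.card ≤ N) {f : Euc d → ℝ}
    (hf : ∀ᵐ x ∂μ, ∃ g ∈ Γ, dist x g ≤ f x) :
    quantPow p N μ ≤ ∫⁻ x, ENNReal.ofReal (f x ^ p) ∂μ := by
  refine (quantPow_le μ hΓ).trans (lintegral_mono_ae (hf.mono fun x hx => ?_))
  obtain ⟨g, hg, hxg⟩ := hx
  rw [← ENNReal.ofReal_rpow_of_nonneg (dist_nonneg.trans hxg) hp]
  refine ENNReal.rpow_le_rpow ((Metric.infEDist_le_edist_of_mem (y := g) (by simpa using hg)).trans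
    ?_) hp
  rw [edist_dist]
  exact ENNReal.ofReal_le_ofReal hxg

lemma quantUB_restrict_of_volume_eq_zero (hd : 1 ≤ d) (hp : 0 < p) {K : Set (Euc d)}
    (hK : IsCompact K) (hK0 : volume K = 0) {μ : Measure (Euc d)} (hμ : μ K ≠ ⊤) :
    QuantUB p (p / d) (μ.restrict K) 0 := by
  intro b hb
  have hd0 : (0 : ℝ) < d := by exact_mod_cast hd
  set r := p / d with hr
  have hr0 : 0 < r := by positivity
  set M := (μ K).toReal * √d ^ p with hM
  have hM0 : 0 ≤ M := by positivity
  set v := (b ^ (1 + r) / (M + 1)) ^ (1 / r) with hv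
  have hv0 : 0 < v := by positivity
  have hvr : v ^ r = b ^ (1 + r) / (M + 1) := by
    rw [hv, ← rpow_mul (by positivity), one_div, inv_mul_cancel₀ hr0.ne', rpow_one]
  filter_upwards [exists_finset_net hd hK (v := v) (by rw [hK0]; simpa using hv0),
    eventually_gt_atTop 0] with N hN hN1
  have hN0 : (0 : ℝ) < N := by exact_mod_cast hN1
  obtain ⟨Γ, hΓ, hdist⟩ := hN
  refine (quantPow_le_of_forall_dist_le hp.le hΓ
    (ae_restrict_of_forall_mem hK.measurableSet hdist)).trans ?_
  rw [lintegral_const, Measure.restrict_apply_univ, ← ENNReal.ofReal_toReal hμ,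
    ← ENNReal.ofReal_mul (by positivity)]
  refine ENNReal.ofReal_le_ofReal ?_
  rw [mul_rpow (by positivity) (by positivity), ← rpow_mul (by positivity), one_div_mul_eq_div,
    ← hr, div_rpow hv0.le hN0.le, rpow_neg hN0.le, ← div_eq_mul_inv, hvr]
  calc _ = M / (M + 1) * (b ^ (1 + r) / (N : ℝ) ^ r) := by rw [hM]; ring
    _ ≤ 1 * (b ^ (1 + r) / (N : ℝ) ^ r) := by
        gcongr
        rw [div_le_one (by positivity)]; linarith
    _ = _ := one_mul _

end Covering

section Moment

variable {d : ℕ} {p : ℝ}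

lemma abs_rpow_neg_sub_rpow_neg_le {m u v s : ℝ} (hm : 0 < m) (hu : m ≤ u) (hv : m ≤ v)
    (hs : 0 < s) : |u ^ (-s) - v ^ (-s)| ≤ s * m ^ (-s - 1) * |u - v| := by
  have := Convex.norm_image_sub_le_of_norm_deriv_le (f := fun t : ℝ => t ^ (-s))
    (s := Set.Ici m) (C := s * m ^ (-s - 1)) (x := v) (y := u)
    (fun t ht => differentiableAt_rpow_const_of_ne _ (hm.trans_le ht).ne')
    (fun t ht => ?_) (convex_Ici m) hv hu
  · simpa only [Real.norm_eq_abs] using this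
  · have ht0 : 0 < t := hm.trans_le ht
    rw [Real.deriv_rpow_const, norm_mul, norm_neg, Real.norm_of_nonneg hs.le,
      Real.norm_of_nonneg (by positivity)]
    exact mul_le_mul_of_nonneg_left (rpow_le_rpow_of_nonpos hm ht (by linarith)) hs.le

/-- The map `y ↦ ‖y‖ ^ (-s) • y` is locally Lipschitz away from the origin. -/
lemma norm_rpow_smul_sub_le {y g : Euc d} {s ε : ℝ} (hs : 0 < s) (hy : 0 < ‖y‖)
    (hε : 2 * ε ≤ ‖y‖) (hg : ‖y - g‖ ≤ ε) :
    ‖‖y‖ ^ (-s) • y - ‖g‖ ^ (-s) • g‖ ≤ (2 ^ s + s * 2 ^ (s + 1)) * ε * ‖y‖ ^ (-s) := by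
  have hε0 : 0 ≤ ε := (norm_nonneg _).trans hg
  have hyg : |‖y‖ - ‖g‖| ≤ ε := (abs_norm_sub_norm_le y g).trans hg
  have hg2 : ‖y‖ / 2 ≤ ‖g‖ := by
    have := (abs_le.1 hyg).2; linarith
  have hm : 0 < ‖y‖ / 2 := by positivity
  have h1 : ‖y‖ ^ (-s) • y - ‖g‖ ^ (-s) • g
      = ‖g‖ ^ (-s) • (y - g) + (‖y‖ ^ (-s) - ‖g‖ ^ (-s)) • y := by
    rw [smul_sub, sub_smul]; abel
  have h2 : (‖y‖ / 2) ^ (-s) = 2 ^ s * ‖y‖ ^ (-s) := by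
    rw [div_rpow hy.le zero_le_two, rpow_neg zero_le_two, div_inv_eq_mul, mul_comm]
  have h3 : (‖y‖ / 2) ^ (-s - 1) * ‖y‖ = 2 ^ (s + 1) * ‖y‖ ^ (-s) := by
    rw [rpow_sub_one hm.ne', h2, rpow_add_one two_ne_zero]
    field_simp
  rw [h1]
  refine (norm_add_le _ _).trans ?_
  rw [norm_smul, norm_smul, Real.norm_of_nonneg (by positivity), Real.norm_eq_abs]
  have h4 : ‖g‖ ^ (-s) ≤ 2 ^ s * ‖y‖ ^ (-s) := by
    rw [← h2]; exact rpow_le_rpow_of_nonpos hm hg2 (by linarith)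
  have h5 := abs_rpow_neg_sub_rpow_neg_le hm (by linarith : ‖y‖ / 2 ≤ ‖y‖) hg2 hs
  calc ‖g‖ ^ (-s) * ‖y - g‖ + |‖y‖ ^ (-s) - ‖g‖ ^ (-s)| * ‖y‖
      ≤ 2 ^ s * ‖y‖ ^ (-s) * ε + s * (‖y‖ / 2) ^ (-s - 1) * ε * ‖y‖ := by
        gcongr
        exact h5.trans (by gcongr)
    _ = 2 ^ s * ‖y‖ ^ (-s) * ε + s * ((‖y‖ / 2) ^ (-s - 1) * ‖y‖) * ε := by ring
    _ = _ := by rw [h3]; ring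

/-- A finite set whose mesh at `x` is of order `N ^ (-1/d) * ‖x‖ ^ (1 + β)` for large `x`:
the image of a uniform net of the unit ball under the inverse of `x ↦ ‖x‖ ^ (-1 - β) • x`. -/
lemma exists_finset_weighted_net (hd : 1 ≤ d) {β : ℝ} (hβ : 0 < β) :
    ∃ C : ℝ, 0 < C ∧ ∀ᶠ N : ℕ in atTop, ∃ Γ : Finset (Euc d), Γ.card ≤ N ∧
      ∀ x, ∃ g ∈ Γ, dist x g ≤ C * (N : ℝ) ^ (-(1 / (d : ℝ))) * max 1 (‖x‖ ^ (1 + β)) := by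
  classical
  have hd0 : (0 : ℝ) < d := by exact_mod_cast hd
  have hK := isCompact_closedBall (0 : Euc d) 1
  obtain ⟨v, hv⟩ := exists_gt (volume (Metric.closedBall (0 : Euc d) 1)).toReal
  have hv0 : 0 < v := ENNReal.toReal_nonneg.trans_lt hv
  set s := 1 + 1 / β with hs
  have hs0 : 0 < s := by positivity
  set C₀ := √d * (4 * v) ^ (1 / (d : ℝ)) with hC₀
  have hC₀0 : 0 < C₀ := by positivity
  set C₁ := 2 + (2 ^ s + s * 2 ^ (s + 1)) with hC₁
  have hC₁0 : 0 < C₁ := by positivity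
  refine ⟨C₀ * C₁, by positivity, ?_⟩
  have hlim : Tendsto (fun N : ℕ => (N - 1) / 2) atTop atTop := by
    refine tendsto_atTop_atTop.2 fun b => ⟨2 * b + 1, fun N hN => ?_⟩
    omega
  filter_upwards [hlim.eventually (exists_finset_net hd hK hv), eventually_ge_atTop 8]
    with N hN hN8
  obtain ⟨G, hG, hnet⟩ := hN
  have hN0 : (0 : ℝ) < N := by exact_mod_cast (by omega : 0 < N)
  set ε := C₀ * (N : ℝ) ^ (-(1 / (d : ℝ))) with hε
  have hε0 : 0 < ε := by positivity
  have hε' : √d * (v / ((N - 1) / 2 : ℕ)) ^ (1 / (d : ℝ)) ≤ ε := by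
    have h1 : (N : ℝ) / 4 ≤ ((N - 1) / 2 : ℕ) := by
      rw [div_le_iff₀ (by norm_num)]
      exact_mod_cast (by omega : N ≤ (N - 1) / 2 * 4)
    rw [hε, hC₀, mul_assoc, rpow_neg hN0.le, ← div_eq_mul_inv, ← div_rpow (by positivity) hN0.le]
    refine mul_le_mul_of_nonneg_left (rpow_le_rpow (by positivity) ?_ (by positivity))
      (by positivity)
    calc v / ((N - 1) / 2 : ℕ) ≤ v / ((N : ℝ) / 4) := by gcongr
      _ = 4 * v / N := by field_simp
  refine ⟨insert 0 (G ∪ G.image fun g => ‖g‖ ^ (-s) • g), ?_, fun x => ?_⟩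
  · refine (Finset.card_insert_le _ _).trans ?_
    have := Finset.card_union_le G (G.image fun g => ‖g‖ ^ (-s) • g)
    have := Finset.card_image_le (s := G) (f := fun g => ‖g‖ ^ (-s) • g)
    omega
  have hC : C₀ * C₁ * (N : ℝ) ^ (-(1 / (d : ℝ))) = C₁ * ε := by rw [hε]; ring
  rw [hC]
  have h2p : (0 : ℝ) < 2 ^ s + s * 2 ^ (s + 1) := by positivity
  rcases le_or_gt ‖x‖ 1 with hx | hx
  · obtain ⟨g, hg, hxg⟩ := hnet x (by simpa using hx)
    refine ⟨g, by simp [hg], hxg.trans (hε'.trans ?_)⟩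
    have h1 : (1 : ℝ) ≤ max 1 (‖x‖ ^ (1 + β)) := le_max_left _ _
    have h2 : 1 ≤ C₁ := by linarith
    calc ε = 1 * ε * 1 := by ring
      _ ≤ C₁ * ε * max 1 (‖x‖ ^ (1 + β)) := by gcongr
  have hx0 : 0 < ‖x‖ := by linarith
  set y : Euc d := ‖x‖ ^ (-(1 + β)) • x with hy
  have hny : ‖y‖ = ‖x‖ ^ (-β) := by
    rw [hy, norm_smul, Real.norm_of_nonneg (by positivity), ← rpow_add_one hx0.ne']
    congr 1; ring
  have hy0 : 0 < ‖y‖ := by rw [hny]; positivity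
  have hys : ‖y‖ ^ (-s) = ‖x‖ ^ (1 + β) := by
    rw [hny, ← rpow_mul hx0.le]
    congr 1
    rw [hs]; field_simp; ring
  have hyx : ‖y‖ ^ (-s) • y = x := by
    rw [hys, hy, smul_smul, ← rpow_add hx0, add_neg_cancel, rpow_zero, one_smul]
  obtain ⟨g, hg, hyg⟩ := hnet y (by
    rw [mem_closedBall_zero_iff, hny]
    exact rpow_le_one_of_one_le_of_nonpos hx.le (by linarith))
  replace hyg := hyg.trans hε'
  have hmax : C₁ * ε * ‖x‖ ^ (1 + β) ≤ C₁ * ε * max 1 (‖x‖ ^ (1 + β)) := by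
    gcongr; exact le_max_right _ _
  rcases le_or_gt (2 * ε) ‖y‖ with h2ε | h2ε
  · refine ⟨‖g‖ ^ (-s) • g, by
      simp only [Finset.mem_insert, Finset.mem_union, Finset.mem_image]
      exact Or.inr (Or.inr ⟨g, hg, rfl⟩), le_trans ?_ hmax⟩
    have := norm_rpow_smul_sub_le hs0 hy0 h2ε (by rwa [← dist_eq_norm])
    rw [hyx, hys, ← dist_eq_norm] at this
    refine this.trans ?_
    gcongr
    linarith
  · refine ⟨0, by simp, le_trans ?_ hmax⟩
    rw [dist_zero_right]
    calc ‖x‖ = ‖y‖ * ‖x‖ ^ (1 + β) := by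
          rw [hny, ← rpow_add hx0, neg_add_cancel_comm_assoc, rpow_one]
      _ ≤ C₁ * ε * ‖x‖ ^ (1 + β) := by
          gcongr
          refine h2ε.le.trans ?_
          gcongr
          linarith

/-- Total mass of `μ` weighted by `1 + ‖x‖ ^ t`. -/
def momentMass (t : ℝ) (μ : Measure (Euc d)) : ENNReal :=
  ∫⁻ x, ENNReal.ofReal (1 + ‖x‖ ^ t) ∂μ

/-- An asymptotic form of Pierce's lemma. -/
lemma exists_quantUB_of_momentMass_le (hd : 1 ≤ d) {η : ℝ} (hp : 0 < p) (hη : 0 < η) :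
    ∃ C : ℝ, 0 < C ∧ ∀ (μ : Measure (Euc d)) (W : ℝ), 0 ≤ W →
      momentMass (p + η) μ ≤ ENNReal.ofReal W →
      QuantUB p (p / d) μ (C * W ^ (1 / (1 + p / d))) := by
  have hd0 : (0 : ℝ) < d := by exact_mod_cast hd
  set r := p / d with hr
  have hr0 : 0 < r := by positivity
  have hβ : 0 < η / p := by positivity
  obtain ⟨C, hC, hCN⟩ := exists_finset_weighted_net hd hβ
  set q := 1 / (1 + r) with hq
  have hqr : q * (1 + r) = 1 := by rw [hq]; field_simp
  refine ⟨(C ^ p) ^ q, by positivity, fun μ W hW hμ b hb => ?_⟩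
  have hb0 : 0 ≤ b := le_trans (by positivity) hb.le
  have hbW : C ^ p * W ≤ b ^ (1 + r) := by
    have := rpow_le_rpow (by positivity) hb.le (by positivity : 0 ≤ 1 + r)
    rwa [← mul_rpow (by positivity) hW, ← rpow_mul (by positivity), hqr, rpow_one] at this
  filter_upwards [hCN, eventually_gt_atTop 0] with N hN hN1
  have hN0 : (0 : ℝ) < N := by exact_mod_cast hN1
  obtain ⟨Γ, hΓ, hdist⟩ := hN
  have hbd : ∀ x : Euc d,
      (C * (N : ℝ) ^ (-(1 / (d : ℝ))) * max 1 (‖x‖ ^ (1 + η / p))) ^ p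
        ≤ C ^ p * (N : ℝ) ^ (-r) * (1 + ‖x‖ ^ (p + η)) := by
    intro x
    rw [mul_rpow (by positivity) (by positivity), mul_rpow hC.le (by positivity),
      ← rpow_mul hN0.le, neg_mul, one_div_mul_eq_div, ← hr]
    gcongr
    rcases max_cases (1 : ℝ) (‖x‖ ^ (1 + η / p)) with h | h
    · rw [h.1, one_rpow]
      have : 0 ≤ ‖x‖ ^ (p + η) := by positivity
      linarith
    · rw [h.1, ← rpow_mul (norm_nonneg _), add_mul, div_mul_cancel₀ _ hp.ne', one_mul]
      linarith
  refine (quantPow_le_of_forall_dist_le hp.le hΓ (Eventually.of_forall hdist)).trans ?_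
  calc _ ≤ ∫⁻ x, ENNReal.ofReal (C ^ p * (N : ℝ) ^ (-r)) * ENNReal.ofReal (1 + ‖x‖ ^ (p + η)) ∂μ := by
        refine lintegral_mono fun x => ?_
        rw [← ENNReal.ofReal_mul (by positivity)]
        exact ENNReal.ofReal_le_ofReal (hbd x)
    _ = ENNReal.ofReal (C ^ p * (N : ℝ) ^ (-r)) * momentMass (p + η) μ := by
        rw [lintegral_const_mul' _ _ ENNReal.ofReal_ne_top]; rfl
    _ ≤ ENNReal.ofReal (C ^ p * (N : ℝ) ^ (-r)) * ENNReal.ofReal W := by gcongr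
    _ ≤ _ := by
        rw [← ENNReal.ofReal_mul (by positivity)]
        refine ENNReal.ofReal_le_ofReal ?_
        calc _ = C ^ p * W * (N : ℝ) ^ (-r) := by ring
          _ ≤ _ := by gcongr

end Moment

section Separation

variable {d : ℕ} {p : ℝ}

lemma radon_inequality {r a b x y : ℝ} (hr : 0 < r) (ha : 0 ≤ a) (hb : 0 ≤ b) (hx : 0 < x)
    (hy : 0 < y) : (a + b) ^ (1 + r) * (x + y) ^ (-r)
      ≤ a ^ (1 + r) * x ^ (-r) + b ^ (1 + r) * y ^ (-r) := by
  have hS : 0 < x + y := by positivity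
  have hconv := (convexOn_rpow (by linarith : (1 : ℝ) ≤ 1 + r)).2
    (show a / x ∈ Set.Ici (0 : ℝ) from div_nonneg ha hx.le)
    (show b / y ∈ Set.Ici (0 : ℝ) from div_nonneg hb hy.le)
    (div_nonneg hx.le hS.le) (div_nonneg hy.le hS.le) (by rw [← add_div, div_self hS.ne'])
  simp only [smul_eq_mul] at hconv
  have h1 : x / (x + y) * (a / x) + y / (x + y) * (b / y) = (a + b) / (x + y) := by
    field_simp
  rw [h1] at hconv
  have key : ∀ s t : ℝ, 0 ≤ s → 0 < t → (s / t) ^ (1 + r) * t = s ^ (1 + r) * t ^ (-r) := by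
    intro s t hs ht
    rw [div_rpow hs ht.le, rpow_add ht, rpow_one, rpow_neg ht.le]
    field_simp
  have h2 := mul_le_mul_of_nonneg_right hconv hS.le
  rw [key _ _ (add_nonneg ha hb) hS] at h2
  refine h2.trans (le_of_eq ?_)
  rw [← key _ _ ha hx, ← key _ _ hb hy]
  field_simp

/-- Adding finite nets of two disjoint compact sets to a grid separates the points of the grid
that serve the first compact set from those that serve the second one. -/
lemma exists_quantPow_add_le_lintegral (hp : 0 ≤ p) {K L : Set (Euc d)} (hK : IsCompact K)
    (hL : IsCompact L) (hKL : Disjoint K L) (μ ν : Measure (Euc d)) :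
    ∃ M : ℕ, ∀ Γ : Finset (Euc d), ∃ m n : ℕ, m + n = Γ.card ∧
      quantPow p (m + M) (μ.restrict K) + quantPow p (n + M) (ν.restrict L)
        ≤ ∫⁻ x, Metric.infEDist x (Γ : Set (Euc d)) ^ p ∂(μ.restrict K + ν.restrict L) := by
  classical
  obtain ⟨δ, hδ, hdisj⟩ := hKL.exists_thickenings hK hL.isClosed
  obtain ⟨S, -, hSfin, hKS⟩ := finite_cover_balls_of_compact hK hδ
  obtain ⟨T, -, hTfin, hLT⟩ := finite_cover_balls_of_compact hL hδ
  refine ⟨hSfin.toFinset.card + hTfin.toFinset.card, fun Γ => ?_⟩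
  refine ⟨(Γ.filter (· ∈ Metric.thickening δ K)).card, (Γ.filter (· ∉ Metric.thickening δ K)).card,
    Finset.card_filter_add_card_filter_not _, ?_⟩
  have key : ∀ (A U : Set (Euc d)) (hU : U.Finite) (Γ' : Finset (Euc d)),
      A ⊆ (⋃ x ∈ U, Metric.ball x δ) → (∀ y ∈ Γ, y ∉ Γ' → y ∉ Metric.thickening δ A) →
      ∀ x ∈ A, Metric.infEDist x ((Γ' ∪ hU.toFinset : Finset (Euc d)) : Set (Euc d)) ^ p
        ≤ Metric.infEDist x (Γ : Set (Euc d)) ^ p := by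
    intro A U hU Γ' hAU hΓ' x hx
    refine ENNReal.rpow_le_rpow (Metric.le_infEDist.2 fun y hy => ?_) hp
    by_cases hyΓ : y ∈ Γ'
    · exact Metric.infEDist_le_edist_of_mem (by simp [hyΓ])
    · obtain ⟨u, hu, hxu⟩ := Set.mem_iUnion₂.1 (hAU hx)
      refine (Metric.infEDist_le_edist_of_mem (y := u) (by simp [hu])).trans ?_
      have h1 : dist x u < δ := hxu
      have h2 : δ ≤ dist x y := by
        by_contra! hlt
        exact hΓ' y hy hyΓ (Metric.mem_thickening_iff.2 ⟨x, hx, by rwa [dist_comm]⟩)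
      rw [edist_dist, edist_dist]
      exact ENNReal.ofReal_le_ofReal (h1.le.trans h2)
  rw [lintegral_add_measure]
  refine add_le_add ?_ ?_
  · refine (quantPow_le (Γ := Γ.filter (· ∈ Metric.thickening δ K) ∪ hSfin.toFinset) _ ?_).trans
      (setLIntegral_mono' hK.measurableSet (key K S hSfin _ hKS fun y hy hy' => ?_))
    · exact (Finset.card_union_le _ _).trans (by omega)
    · simpa [hy] using hy'
  · refine (quantPow_le (Γ := Γ.filter (· ∉ Metric.thickening δ K) ∪ hTfin.toFinset) _ ?_).trans
      (setLIntegral_mono' hL.measurableSet (key L T hTfin _ hLT fun y hy hy' => ?_))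
    · exact (Finset.card_union_le _ _).trans (by omega)
    · have : y ∈ Metric.thickening δ K := by simpa [hy] using hy'
      exact Set.disjoint_left.1 hdisj this

lemma QuantLB.add_of_isCompact (hp : 0 ≤ p) {r a b : ℝ} (hr : 0 < r) {K L : Set (Euc d)}
    (hK : IsCompact K) (hL : IsCompact L) (hKL : Disjoint K L) {μ ν : Measure (Euc d)}
    (ha : QuantLB p r (μ.restrict K) a) (hb : QuantLB p r (ν.restrict L) b) :
    QuantLB p r (μ.restrict K + ν.restrict L) (a + b) := by
  rcases le_or_gt a 0 with ha0 | ha0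
  · exact (hb.mono (by linarith)).mono_measure (Measure.le_add_left le_rfl)
  rcases le_or_gt b 0 with hb0 | hb0
  · exact (ha.mono (by linarith)).mono_measure (Measure.le_add_right le_rfl)
  intro c hc hcab
  obtain ⟨t, ht, ht1⟩ : ∃ t, c / (a + b) < t ∧ t < 1 :=
    exists_between (by rwa [div_lt_one (by positivity)])
  have ht0 : 0 < t := lt_trans (by positivity) ht
  have hct : c < t * a + t * b := by
    rw [div_lt_iff₀ (by positivity)] at ht; linarith
  obtain ⟨M, hM⟩ := exists_quantPow_add_le_lintegral hp hK hL hKL μ ν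
  obtain ⟨N₁, hN₁⟩ := eventually_atTop.1 (ha (t * a) (by positivity) (by nlinarith))
  obtain ⟨N₂, hN₂⟩ := eventually_atTop.1 (hb (t * b) (by positivity) (by nlinarith))
  set M' := M + N₁ + N₂ + 1 with hM'
  have hlim : Tendsto (fun N : ℕ => ((t * a + t * b) / c - 1) * (N : ℝ)) atTop atTop :=
    tendsto_natCast_atTop_atTop.const_mul_atTop (by
      rw [sub_pos, lt_div_iff₀ hc]; linarith)
  filter_upwards [hlim.eventually_ge_atTop (2 * M' : ℝ), eventually_gt_atTop 0] with N hN hN1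
  have hN0 : (0 : ℝ) < N := by exact_mod_cast hN1
  refine le_quantPow fun Γ hΓ => ?_
  obtain ⟨m, n, hmn, hle⟩ := hM Γ
  refine le_trans ?_ hle
  refine le_trans ?_ (add_le_add (quantPow_anti (show m + M ≤ m + M' by omega) _)
    (quantPow_anti (show n + M ≤ n + M' by omega) _))
  refine le_trans ?_ (add_le_add (hN₁ (m + M') (by omega)) (hN₂ (n + M') (by omega)))
  rw [← ENNReal.ofReal_add (by positivity) (by positivity)]
  refine ENNReal.ofReal_le_ofReal (le_trans ?_ (radon_inequality hr (by positivity)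
    (by positivity) (by exact_mod_cast (by omega)) (by exact_mod_cast (by omega))))
  have hle2 : ((m + M' : ℕ) : ℝ) + ((n + M' : ℕ) : ℝ) ≤ (t * a + t * b) / c * N := by
    have : (m : ℝ) + n ≤ N := by exact_mod_cast hmn.trans_le hΓ
    push_cast
    linarith
  have hpos : (0 : ℝ) < ((m + M' : ℕ) : ℝ) + ((n + M' : ℕ) : ℝ) := by
    rw [← Nat.cast_add]; exact_mod_cast (by omega)
  calc c ^ (1 + r) * (N : ℝ) ^ (-r) = c * c ^ r * (N : ℝ) ^ (-r) := by
        rw [rpow_add hc, rpow_one]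
    _ ≤ (t * a + t * b) * c ^ r * (N : ℝ) ^ (-r) := by gcongr
    _ = (t * a + t * b) ^ (1 + r) * ((t * a + t * b) / c * N) ^ (-r) :=
        (rpow_mul_eq_of_pos (by positivity) hc hN0.le).symm
    _ ≤ _ := mul_le_mul_of_nonneg_left (rpow_le_rpow_of_nonpos hpos hle2 (by linarith))
        (by positivity)

lemma measurable_momentWeight (t : ℝ) :
    Measurable fun x : Euc d => ENNReal.ofReal (1 + ‖x‖ ^ t) := by fun_prop

lemma measure_univ_le_momentMass (t : ℝ) (μ : Measure (Euc d)) :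
    μ Set.univ ≤ momentMass t μ := by
  rw [momentMass, ← lintegral_one]
  refine lintegral_mono fun x => ?_
  rw [← ENNReal.ofReal_one]
  refine ENNReal.ofReal_le_ofReal ?_
  have : 0 ≤ ‖x‖ ^ t := by positivity
  linarith

lemma exists_isCompact_momentMass_compl_le {t : ℝ} {μ : Measure (Euc d)}
    (hμ : momentMass t μ ≠ ⊤) {A : Set (Euc d)} (hA : MeasurableSet A) (hA0 : μ Aᶜ = 0)
    {ε : ENNReal} (hε : ε ≠ 0) :
    ∃ K ⊆ A, IsCompact K ∧ momentMass t (μ.restrict Kᶜ) ≤ ε := by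
  set w : Euc d → ENNReal := fun x => ENNReal.ofReal (1 + ‖x‖ ^ t) with hw
  have : IsFiniteMeasure (μ.withDensity w) := isFiniteMeasure_withDensity hμ
  obtain ⟨K, hKA, hK, hlt⟩ := hA.exists_isCompact_sdiff_lt (μ := μ.withDensity w)
    (measure_ne_top _ _) hε
  refine ⟨K, hKA, hK, ?_⟩
  have h0 : μ.withDensity w Aᶜ = 0 := withDensity_absolutelyContinuous μ w hA0
  calc momentMass t (μ.restrict Kᶜ) = μ.withDensity w Kᶜ :=
        (withDensity_apply w hK.measurableSet.compl).symm
    _ ≤ μ.withDensity w ((A \ K) ∪ Aᶜ) := by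
        refine measure_mono fun x hx => ?_
        by_cases hxA : x ∈ A
        · exact Or.inl ⟨hxA, hx⟩
        · exact Or.inr hxA
    _ ≤ ε := (measure_union_le _ _).trans (by rw [h0, add_zero]; exact hlt.le)

lemma exists_isCompact_quantUB_compl (hd : 1 ≤ d) {η : ℝ} (hp : 0 < p) (hη : 0 < η)
    {μ : Measure (Euc d)} (hμ : momentMass (p + η) μ ≠ ⊤) {A : Set (Euc d)}
    (hA : MeasurableSet A) (hA0 : μ Aᶜ = 0) {ε : ℝ} (hε : 0 < ε) :
    ∃ K ⊆ A, IsCompact K ∧ QuantUB p (p / d) (μ.restrict Kᶜ) ε := by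
  have hd0 : (0 : ℝ) < d := by exact_mod_cast hd
  have hr0 : 0 < p / d := by positivity
  obtain ⟨C, hC, hCW⟩ := exists_quantUB_of_momentMass_le (d := d) hd hp hη
  set W := (ε / C) ^ (1 + p / d) with hW
  have hW0 : 0 < W := by positivity
  obtain ⟨K, hKA, hK, hle⟩ := exists_isCompact_momentMass_compl_le hμ hA hA0
    (ε := ENNReal.ofReal W) (by simpa using hW0)
  refine ⟨K, hKA, hK, ?_⟩
  have := hCW _ W hW0.le hle
  rwa [hW, ← rpow_mul (by positivity), mul_one_div_cancel (by positivity), rpow_one,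
    mul_div_cancel₀ _ hC.ne'] at this

lemma QuantLB.add (hd : 1 ≤ d) {η a b : ℝ} (hp : 0 < p) (hη : 0 < η)
    {μ ν : Measure (Euc d)} (hμ : momentMass (p + η) μ ≠ ⊤) (hν : momentMass (p + η) ν ≠ ⊤)
    (hμν : μ.MutuallySingular ν) (ha : QuantLB p (p / d) μ a) (hb : QuantLB p (p / d) ν b) :
    QuantLB p (p / d) (μ + ν) (a + b) := by
  have hd0 : (0 : ℝ) < d := by exact_mod_cast hd
  have hr0 : 0 < p / d := by positivity
  obtain ⟨E, hE, hμE, hνE⟩ := hμν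
  refine QuantLB.of_forall_lt fun c hc => ?_
  set ε := (a + b - c) / 2 with hε
  have hε0 : 0 < ε := by rw [hε]; linarith
  obtain ⟨K, hKE, hK, hKub⟩ := exists_isCompact_quantUB_compl hd hp hη hμ hE.compl
    (by rwa [compl_compl]) hε0
  obtain ⟨L, hLE, hL, hLub⟩ := exists_isCompact_quantUB_compl hd hp hη hν hE hνE hε0
  have hKL : Disjoint K L := (disjoint_compl_left.mono hKE hLE)
  have hμK := Measure.restrict_add_restrict_compl (μ := μ) hK.measurableSet
  have hνL := Measure.restrict_add_restrict_compl (μ := ν) hL.measurableSet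
  have h1 : QuantLB p (p / d) (μ.restrict K) (a - ε) :=
    QuantLB.of_add hp.le hr0 hε0.le (by rwa [hμK, sub_add_cancel]) hKub
  have h2 : QuantLB p (p / d) (ν.restrict L) (b - ε) :=
    QuantLB.of_add hp.le hr0 hε0.le (by rwa [hνL, sub_add_cancel]) hLub
  refine ((h1.add_of_isCompact hp.le hr0 hK hL hKL h2).mono (by linarith)).mono_measure ?_
  exact add_le_add Measure.restrict_le_self Measure.restrict_le_self

lemma quantUB_zero_of_mutuallySingular (hd : 1 ≤ d) {η : ℝ} (hp : 0 < p) (hη : 0 < η)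
    {ν : Measure (Euc d)} (hν : momentMass (p + η) ν ≠ ⊤)
    (hsing : ν.MutuallySingular volume) : QuantUB p (p / d) ν 0 := by
  have hd0 : (0 : ℝ) < d := by exact_mod_cast hd
  have hr0 : 0 < p / d := by positivity
  obtain ⟨E, hE, hνE, hvE⟩ := hsing
  refine QuantUB.of_forall_lt fun ε hε => ?_
  obtain ⟨K, hKE, hK, hKub⟩ := exists_isCompact_quantUB_compl hd hp hη hν hE.compl
    (by rwa [compl_compl]) hε
  have hνK : ν K ≠ ⊤ :=
    ((measure_mono (Set.subset_univ K)).trans (measure_univ_le_momentMass _ ν)).trans_lt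
      (lt_top_iff_ne_top.2 hν) |>.ne
  have h1 := quantUB_restrict_of_volume_eq_zero hd hp hK (measure_mono_null hKE hvE) hνK
  have := h1.add hp.le hr0 le_rfl hε.le hKub
  rwa [zero_add, Measure.restrict_add_restrict_compl hK.measurableSet] at this

end Separation

section Bridge

variable {d : ℕ} {p t : ℝ} {μ : Measure (Euc d)}

lemma edist_rpow_le (hp : 0 < p) (hpt : p ≤ t) (x a : Euc d) :
    edist x a ^ p ≤ ENNReal.ofReal (2 ^ p * (1 + ‖a‖ ^ p)) * ENNReal.ofReal (1 + ‖x‖ ^ t) := by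
  rw [edist_dist, ENNReal.ofReal_rpow_of_nonneg dist_nonneg hp.le,
    ← ENNReal.ofReal_mul (by positivity)]
  refine ENNReal.ofReal_le_ofReal ?_
  have hx : ‖x‖ ^ p ≤ 1 + ‖x‖ ^ t := by
    rcases le_total ‖x‖ 1 with h1 | h1
    · have := rpow_le_one (norm_nonneg x) h1 hp.le
      have : 0 ≤ ‖x‖ ^ t := by positivity
      linarith
    · have := rpow_le_rpow_of_exponent_le h1 hpt
      linarith
  have ha : 0 ≤ ‖a‖ ^ p := by positivity
  have hxt : 0 ≤ ‖x‖ ^ t := by positivity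
  calc dist x a ^ p ≤ (2 * max ‖x‖ ‖a‖) ^ p := by
        refine rpow_le_rpow dist_nonneg ((dist_eq_norm x a).le.trans ((norm_sub_le x a).trans ?_))
          hp.le
        rw [two_mul]
        exact add_le_add (le_max_left _ _) (le_max_right _ _)
    _ = 2 ^ p * max ‖x‖ ‖a‖ ^ p := mul_rpow (by norm_num) (by positivity)
    _ ≤ 2 ^ p * ((1 + ‖a‖ ^ p) * (1 + ‖x‖ ^ t)) := by
        gcongr
        rcases max_choice ‖x‖ ‖a‖ with h | h <;> rw [h] <;> nlinarith [mul_nonneg ha hxt]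
    _ = _ := by ring

lemma lintegral_infEDist_rpow_ne_top (hp : 0 < p) (hpt : p ≤ t) (hμ : momentMass t μ ≠ ⊤)
    {Γ : Finset (Euc d)} (hΓ : Γ.Nonempty) :
    ∫⁻ x, Metric.infEDist x (Γ : Set (Euc d)) ^ p ∂μ ≠ ⊤ := by
  obtain ⟨a, ha⟩ := hΓ
  have hle : ∫⁻ x, Metric.infEDist x (Γ : Set (Euc d)) ^ p ∂μ
      ≤ ENNReal.ofReal (2 ^ p * (1 + ‖a‖ ^ p)) * momentMass t μ := by
    rw [momentMass, ← lintegral_const_mul _ (measurable_momentWeight t)]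
    exact lintegral_mono fun x => (ENNReal.rpow_le_rpow
      (Metric.infEDist_le_edist_of_mem (by simpa using ha)) hp.le).trans (edist_rpow_le hp hpt x a)
  exact (hle.trans_lt (ENNReal.mul_lt_top ENNReal.ofReal_lt_top hμ.lt_top)).ne

lemma quantPow_ne_top (hp : 0 < p) (hpt : p ≤ t) (hμ : momentMass t μ ≠ ⊤) {N : ℕ}
    (hN : 1 ≤ N) : quantPow p N μ ≠ ⊤ :=
  ((quantPow_le (Γ := {0}) μ (by simpa using hN)).trans_lt
    (lintegral_infEDist_rpow_ne_top hp hpt hμ (by simp)).lt_top).ne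

lemma quantErrM_eq (hp : 0 < p) {Γ : Finset (Euc d)} (hΓ : Γ.Nonempty) :
    quantErrM p μ Γ = (∫⁻ x, Metric.infEDist x (Γ : Set (Euc d)) ^ p ∂μ).toReal ^ (1 / p) := by
  rw [quantErrM, integral_eq_lintegral_of_nonneg_ae
    (Eventually.of_forall fun x => rpow_nonneg Metric.infDist_nonneg p)
    ((Metric.continuous_infDist_pt _).measurable.pow_const p).aestronglyMeasurable]
  congr 2
  refine lintegral_congr fun x => ?_
  rw [← ENNReal.ofReal_rpow_of_nonneg Metric.infDist_nonneg hp.le, Metric.infDist,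
    ENNReal.ofReal_toReal (Metric.infEDist_ne_top (by simpa using hΓ))]

lemma optQuantErrM_eq (hp : 0 < p) (hpt : p ≤ t) (hμ : momentMass t μ ≠ ⊤) (hμ0 : μ ≠ 0)
    {N : ℕ} (hN : 1 ≤ N) : optQuantErrM p N μ = (quantPow p N μ).toReal ^ (1 / p) := by
  have hne : {e | ∃ Γ : Finset (Euc d), Γ.Nonempty ∧ Γ.card ≤ N ∧ e = quantErrM p μ Γ}.Nonempty :=
    ⟨_, {0}, by simp, by simpa using hN, rfl⟩
  refine le_antisymm ?_ (le_csInf hne ?_)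
  · by_contra! hlt
    set o := optQuantErrM p N μ
    have ho : 0 < o := (by positivity : (0 : ℝ) ≤ _).trans_lt hlt
    rw [one_div, rpow_inv_lt_iff_of_pos ENNReal.toReal_nonneg ho.le hp,
      ← ENNReal.lt_ofReal_iff_toReal_lt (quantPow_ne_top hp hpt hμ hN)] at hlt
    obtain ⟨Γ, hΓN, hΓ⟩ := exists_lt_of_quantPow_lt hlt
    have hΓne : Γ.Nonempty := by
      rw [Finset.nonempty_iff_ne_empty]
      rintro rfl
      simp [ENNReal.top_rpow_of_pos hp, ENNReal.top_mul, hμ0] at hΓ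
    rw [ENNReal.lt_ofReal_iff_toReal_lt (lintegral_infEDist_rpow_ne_top hp hpt hμ hΓne),
      ← rpow_inv_lt_iff_of_pos ENNReal.toReal_nonneg ho.le hp, ← one_div,
      ← quantErrM_eq hp hΓne] at hΓ
    refine absurd hΓ (not_lt.2 (csInf_le ⟨0, ?_⟩ ⟨Γ, hΓne, hΓN, rfl⟩))
    rintro _ ⟨Γ', hΓ', -, rfl⟩
    rw [quantErrM_eq hp hΓ']
    positivity
  · rintro _ ⟨Γ, hΓ, hΓN, rfl⟩
    rw [quantErrM_eq hp hΓ]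
    refine rpow_le_rpow ENNReal.toReal_nonneg (ENNReal.toReal_mono
      (lintegral_infEDist_rpow_ne_top hp hpt hμ hΓ) (quantPow_le μ hΓN)) (by positivity)

lemma rpow_mul_optQuantErrM_eq (hd : 1 ≤ d) (hp : 0 < p) (hpt : p ≤ t) (hμ : momentMass t μ ≠ ⊤)
    (hμ0 : μ ≠ 0) {N : ℕ} (hN : 1 ≤ N) : (N : ℝ) ^ (1 / (d : ℝ)) * optQuantErrM p N μ
      = ((N : ℝ) ^ (p / d) * (quantPow p N μ).toReal) ^ (1 / p) := by
  have hd0 : (0 : ℝ) < d := by exact_mod_cast hd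
  rw [optQuantErrM_eq hp hpt hμ hμ0 hN, mul_rpow (by positivity) ENNReal.toReal_nonneg,
    ← rpow_mul (by positivity)]
  congr 3
  field_simp

end Bridge

section Constant

variable {d : ℕ} {p : ℝ}

lemma momentMass_ne_top_of_bounded {t R : ℝ} (ht : 0 ≤ t) {μ : Measure (Euc d)}
    [IsFiniteMeasure μ] (hμ : ∀ᵐ x ∂μ, ‖x‖ ≤ R) : momentMass t μ ≠ ⊤ := by
  have hle : momentMass t μ ≤ ∫⁻ _, ENNReal.ofReal (1 + R ^ t) ∂μ := by
    refine lintegral_mono_ae (hμ.mono fun x hx => ENNReal.ofReal_le_ofReal ?_)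
    gcongr
  rw [lintegral_const] at hle
  exact (hle.trans_lt (ENNReal.mul_lt_top ENNReal.ofReal_lt_top (measure_lt_top _ _))).ne

lemma isCompact_unitCube : IsCompact {x : Euc d | ∀ i, x i ∈ Set.Icc (0 : ℝ) 1} := by
  rw [unitCube_eq_preimage]
  exact (PiLp.homeomorph 2 fun _ : Fin d => ℝ).isCompact_preimage.2
    (isCompact_univ_pi fun _ => isCompact_Icc)

instance : IsProbabilityMeasure (unifCube d) :=
  ⟨by rw [unifCube, Measure.restrict_apply_univ, volume_unitCube]⟩

lemma momentMass_unifCube_ne_top (hp : 0 ≤ p) : momentMass p (unifCube d) ≠ ⊤ := by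
  obtain ⟨R, hR⟩ := isCompact_unitCube (d := d).isBounded.exists_norm_le
  exact momentMass_ne_top_of_bounded hp (ae_restrict_of_forall_mem measurableSet_unitCube hR)

lemma bddBelow_zadorConst : BddBelow {e | ∃ N : ℕ, 1 ≤ N ∧
    e = (N : ℝ) ^ (1 / (d : ℝ)) * optQuantErrM p N (unifCube d)} := by
  refine ⟨0, ?_⟩
  rintro _ ⟨N, -, rfl⟩
  refine mul_nonneg (by positivity) (Real.sInf_nonneg ?_)
  rintro _ ⟨Γ, -, -, rfl⟩
  exact rpow_nonneg (integral_nonneg fun x => rpow_nonneg Metric.infDist_nonneg p) _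

lemma zadorConst_nonneg : 0 ≤ zadorConst p d := by
  refine Real.sInf_nonneg ?_
  rintro _ ⟨N, -, rfl⟩
  refine mul_nonneg (by positivity) (Real.sInf_nonneg ?_)
  rintro _ ⟨Γ, -, -, rfl⟩
  exact rpow_nonneg (integral_nonneg fun x => rpow_nonneg Metric.infDist_nonneg p) _

lemma zadorConst_rpow_le_quantPow (hd : 1 ≤ d) (hp : 0 < p) {N : ℕ} (hN : 1 ≤ N) :
    ENNReal.ofReal (zadorConst p d ^ p * (N : ℝ) ^ (-(p / d))) ≤ quantPow p N (unifCube d) := by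
  have hN0 : (0 : ℝ) < N := by exact_mod_cast hN
  have h : zadorConst p d ≤ _ := csInf_le bddBelow_zadorConst ⟨N, hN, rfl⟩
  rw [rpow_mul_optQuantErrM_eq hd hp le_rfl (momentMass_unifCube_ne_top hp.le)
    (IsProbabilityMeasure.ne_zero _) hN, one_div p] at h
  rw [ENNReal.ofReal_le_iff_le_toReal
    (quantPow_ne_top hp le_rfl (momentMass_unifCube_ne_top hp.le) hN), rpow_neg hN0.le,
    mul_inv_le_iff₀ (by positivity), mul_comm]
  exact (le_rpow_inv_iff_of_pos zadorConst_nonneg (by positivity) hp).1 h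

lemma exists_quantPow_unifCube_le (hd : 1 ≤ d) (hp : 0 < p) {c : ℝ}
    (hc : zadorConst p d ^ p < c) : ∃ n : ℕ, 1 ≤ n ∧
      quantPow p n (unifCube d) ≤ ENNReal.ofReal (c * (n : ℝ) ^ (-(p / d))) := by
  have hc0 : 0 < c := (rpow_nonneg zadorConst_nonneg p).trans_lt hc
  rw [← lt_rpow_inv_iff_of_pos zadorConst_nonneg hc0.le hp] at hc
  obtain ⟨_, ⟨n, hn, rfl⟩, hlt⟩ := exists_lt_of_csInf_lt (by exact ⟨_, 1, le_rfl, rfl⟩) hc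
  have hn0 : (0 : ℝ) < n := by exact_mod_cast hn
  refine ⟨n, hn, ?_⟩
  rw [rpow_mul_optQuantErrM_eq hd hp le_rfl (momentMass_unifCube_ne_top hp.le)
    (IsProbabilityMeasure.ne_zero _) hn, one_div p,
    rpow_lt_rpow_iff (by positivity) hc0.le (by positivity), mul_comm] at hlt
  rw [ENNReal.le_ofReal_iff_toReal_le
    (quantPow_ne_top hp le_rfl (momentMass_unifCube_ne_top hp.le) hn) (by positivity),
    rpow_neg hn0.le, ← div_eq_mul_inv, le_div_iff₀ (by positivity)]
  exact hlt.le

lemma rpow_div_two_le_quantPow_unifCube (hp : 0 < p) {N : ℕ} {ρ : ℝ} (hρ : 0 < ρ)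
    (hN : N * (ENNReal.ofReal (ρ ^ d) * volume (Metric.ball (0 : Euc d) 1)) ≤ 2⁻¹) :
    ENNReal.ofReal ρ ^ p * 2⁻¹ ≤ quantPow p N (unifCube d) := by
  refine le_quantPow fun Γ hΓ => ?_
  refine le_trans ?_ (mul_meas_ge_le_lintegral (by fun_prop) (ENNReal.ofReal ρ ^ p))
  gcongr
  set S := {x : Euc d | ENNReal.ofReal ρ ^ p ≤ Metric.infEDist x (Γ : Set (Euc d)) ^ p} with hS
  have hSm : MeasurableSet S := measurableSet_le (by fun_prop) (by fun_prop)
  have hsub : Sᶜ ⊆ ⋃ a ∈ Γ, Metric.ball a ρ := by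
    intro x hx
    simp only [hS, Set.mem_compl_iff, Set.mem_ofPred_eq, not_le] at hx
    rw [ENNReal.rpow_lt_rpow_iff hp, Metric.infEDist_lt_iff] at hx
    obtain ⟨a, ha, hxa⟩ := hx
    rw [edist_lt_ofReal] at hxa
    exact Set.mem_iUnion₂.2 ⟨a, by simpa using ha, hxa⟩
  have hle : unifCube d Sᶜ ≤ 2⁻¹ := calc
    unifCube d Sᶜ ≤ volume (⋃ a ∈ Γ, Metric.ball a ρ) :=
        (Measure.restrict_apply_le _ _).trans (measure_mono hsub)
    _ ≤ ∑ a ∈ Γ, volume (Metric.ball a ρ) := measure_biUnion_finset_le _ _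
    _ = Γ.card * (ENNReal.ofReal (ρ ^ d) * volume (Metric.ball (0 : Euc d) 1)) := by
        simp [Measure.addHaar_ball_of_pos _ _ hρ]
    _ ≤ _ := le_trans (by gcongr) hN
  have h1 := prob_add_prob_compl (μ := unifCube d) hSm
  rw [← ENNReal.inv_two_add_inv_two] at h1
  by_contra! hlt
  exact absurd h1 (ENNReal.add_lt_add_of_lt_of_le (by finiteness) hlt hle).ne

lemma zadorConst_pos (hd : 1 ≤ d) (hp : 0 < p) : 0 < zadorConst p d := by
  have hd0 : (0 : ℝ) < d := by exact_mod_cast hd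
  set ω := (volume (Metric.ball (0 : Euc d) 1)).toReal with hω
  have hω' : volume (Metric.ball (0 : Euc d) 1) = ENNReal.ofReal ω :=
    (ENNReal.ofReal_toReal measure_ball_lt_top.ne).symm
  have hω0 : 0 < ω := ENNReal.toReal_pos (Metric.measure_ball_pos _ _ one_pos).ne'
    measure_ball_lt_top.ne
  set c := ((2 * ω) ^ (-(p / d)) * 2⁻¹) ^ (1 / p) with hc
  have hc0 : 0 < c := by positivity
  refine hc0.trans_le (le_csInf ⟨_, 1, le_rfl, rfl⟩ ?_)
  rintro _ ⟨N, hN, rfl⟩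
  have hN0 : (0 : ℝ) < N := by exact_mod_cast hN
  rw [rpow_mul_optQuantErrM_eq hd hp le_rfl (momentMass_unifCube_ne_top hp.le)
    (IsProbabilityMeasure.ne_zero _) hN, hc]
  refine rpow_le_rpow (by positivity) ?_ (by positivity)
  set ρ := (2 * ω * N) ^ (-(1 / (d : ℝ))) with hρ
  have hρ0 : 0 < ρ := by positivity
  have hρd : ρ ^ d = (2 * ω * N)⁻¹ := by
    rw [← rpow_natCast, hρ, ← rpow_mul (by positivity), neg_mul, one_div,
      inv_mul_cancel₀ hd0.ne', rpow_neg_one]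
  have hρp : ρ ^ p = (2 * ω) ^ (-(p / d)) * (N : ℝ) ^ (-(p / d)) := by
    rw [hρ, ← rpow_mul (by positivity), ← mul_rpow (by positivity) hN0.le]
    congr 1
    ring
  have h := rpow_div_two_le_quantPow_unifCube (d := d) hp (N := N) hρ0 (by
    rw [hω', ← ENNReal.ofReal_mul (by positivity), ← ENNReal.ofReal_natCast,
      ← ENNReal.ofReal_mul (by positivity), hρd, ← ENNReal.ofReal_ofNat,
      ← ENNReal.ofReal_inv_of_pos two_pos]
    refine ENNReal.ofReal_le_ofReal (le_of_eq ?_)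
    field_simp)
  rw [ENNReal.ofReal_rpow_of_nonneg hρ0.le hp.le, ← ENNReal.ofReal_ofNat,
    ← ENNReal.ofReal_inv_of_pos two_pos, ← ENNReal.ofReal_mul (by positivity),
    ENNReal.ofReal_le_iff_le_toReal
      (quantPow_ne_top hp le_rfl (momentMass_unifCube_ne_top hp.le) hN), hρp] at h
  calc (2 * ω) ^ (-(p / d)) * 2⁻¹
      = (N : ℝ) ^ (p / d) * ((2 * ω) ^ (-(p / d)) * (N : ℝ) ^ (-(p / d)) * 2⁻¹) := by
        rw [rpow_neg hN0.le]
        field_simp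
    _ ≤ _ := by gcongr

end Constant

/-- The asymptotic constant in `QuantUB` and `QuantLB` for Lebesgue measure on a set of measure
one. -/
def quantCoeff (p : ℝ) (d : ℕ) : ℝ := (zadorConst p d ^ p) ^ (1 / (1 + p / d))

section Lebesgue

variable {d : ℕ} {p : ℝ}

lemma quantCoeff_pos (hd : 1 ≤ d) (hp : 0 < p) : 0 < quantCoeff p d :=
  rpow_pos_of_pos (rpow_pos_of_pos (zadorConst_pos hd hp) _) _

lemma quantCoeff_rpow (hp : 0 < p) :
    quantCoeff p d ^ (1 + p / d) = zadorConst p d ^ p := by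
  rw [quantCoeff, ← rpow_mul (rpow_nonneg zadorConst_nonneg _),
    one_div_mul_cancel (by positivity), rpow_one]

lemma quantUB_volume_restrict_of_isCompact (hd : 1 ≤ d) (hp : 0 < p) {K : Set (Euc d)}
    (hK : IsCompact K) :
    QuantUB p (p / d) (volume.restrict K) (quantCoeff p d * (volume K).toReal) := by
  refine QuantUB.of_forall_lt fun b hb => ?_
  have hcont : Tendsto (fun c : ℝ => c ^ (1 / (1 + p / d)) * (volume K).toReal)
      (nhdsWithin (zadorConst p d ^ p) (Set.Ioi (zadorConst p d ^ p)))
      (nhds (quantCoeff p d * (volume K).toReal)) := by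
    refine Tendsto.mono_left ?_ nhdsWithin_le_nhds
    exact ((continuousAt_rpow_const _ _ (Or.inr (by positivity))).tendsto).mul_const _
  obtain ⟨c, hcb, hc⟩ := ((hcont.eventually (gt_mem_nhds hb)).and self_mem_nhdsWithin).exists
  obtain ⟨n, hn, hcn⟩ := exists_quantPow_unifCube_le hd hp hc
  exact (quantUB_volume_restrict_of_le hd hp hK
    ((rpow_nonneg zadorConst_nonneg _).trans_lt hc) hn hcn).mono hcb.le

lemma quantUB_volume_restrict (hd : 1 ≤ d) (hp : 0 < p) {E : Set (Euc d)}
    (hE : MeasurableSet E) (hEb : Bornology.IsBounded E) :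
    QuantUB p (p / d) (volume.restrict E) (quantCoeff p d * (volume E).toReal) := by
  have hd0 : (0 : ℝ) < d := by exact_mod_cast hd
  refine QuantUB.of_forall_lt fun b hb => ?_
  have hfin : volume E ≠ ⊤ := hEb.measure_lt_top.ne
  have : Fact (volume E < ⊤) := ⟨hfin.lt_top⟩
  obtain ⟨R, hR⟩ := hEb.exists_norm_le
  have hmom : momentMass (p + 1) (volume.restrict E) ≠ ⊤ :=
    momentMass_ne_top_of_bounded (by positivity) (ae_restrict_of_forall_mem hE hR)
  obtain ⟨K, hKE, hK, hKc⟩ := exists_isCompact_quantUB_compl hd hp one_pos hmom hE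
    (by rw [Measure.restrict_apply hE.compl, Set.compl_inter_self, measure_empty])
    (sub_pos.2 hb)
  have hadd := (quantUB_volume_restrict_of_isCompact hd hp hK).add hp.le (by positivity)
    (mul_nonneg (quantCoeff_pos hd hp).le ENNReal.toReal_nonneg) (sub_pos.2 hb).le hKc
  have heq : volume.restrict K + (volume.restrict E).restrict Kᶜ = volume.restrict E := by
    rw [← Measure.restrict_restrict_of_subset hKE,
      Measure.restrict_add_restrict_compl hK.measurableSet]
  rw [heq] at hadd
  refine hadd.mono ?_
  have : quantCoeff p d * (volume K).toReal ≤ quantCoeff p d * (volume E).toReal :=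
    mul_le_mul_of_nonneg_left (ENNReal.toReal_mono hfin (measure_mono hKE))
      (quantCoeff_pos hd hp).le
  linarith

lemma exists_quantLB_volume_restrict_superset (hd : 1 ≤ d) (hp : 0 < p) {E : Set (Euc d)}
    (hEb : Bornology.IsBounded E) : ∃ B, E ⊆ B ∧ MeasurableSet B ∧ Bornology.IsBounded B ∧
      QuantLB p (p / d) (volume.restrict B) (quantCoeff p d * (volume B).toReal) := by
  have hd0 : (0 : ℝ) < d := by exact_mod_cast hd
  obtain ⟨R, hR0, hR⟩ := hEb.exists_pos_norm_le
  set l := (2 * R)⁻¹ with hl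
  have hl0 : 0 < l := by positivity
  set v : Euc d := WithLp.toLp 2 fun _ => 1 / 2 with hv
  set B := (fun x => l • x + v) ⁻¹' {x : Euc d | ∀ i, x i ∈ Set.Icc (0 : ℝ) 1} with hB
  have hm : Measurable fun x : Euc d => l • x + v := by fun_prop
  have hBm : MeasurableSet B := measurableSet_unitCube.preimage hm
  have hvol : ENNReal.ofReal (l ^ d) * volume B = 1 := by
    rw [← volume_unitCube (d := d)]
    conv_rhs => rw [map_volume_smul_add hl0 v]
    rw [Measure.smul_apply, Measure.map_apply hm measurableSet_unitCube, smul_eq_mul]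
  have hvolB : (volume B).toReal = (l ^ d)⁻¹ := by
    have := congrArg ENNReal.toReal hvol
    rw [ENNReal.toReal_mul, ENNReal.toReal_ofReal (by positivity), ENNReal.toReal_one] at this
    exact eq_inv_of_mul_eq_one_right this
  refine ⟨B, fun x hx i => ?_, hBm, ?_, ?_⟩
  · have h1 : |x i| ≤ R := (PiLp.norm_apply_le x i).trans (hR x hx)
    have h2 : |l * x i| ≤ 1 / 2 := by
      rw [abs_mul, abs_of_pos hl0, hl, inv_mul_le_iff₀ (by positivity)]
      linarith
    have h3 : (l • x + v) i = l * x i + 1 / 2 := by simp [hv]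
    rw [h3]
    constructor <;> linarith [(abs_le.1 h2).1, (abs_le.1 h2).2]
  · have : B ⊆ (fun y => l⁻¹ • (y - v)) '' {x : Euc d | ∀ i, x i ∈ Set.Icc (0 : ℝ) 1} :=
      fun x hx => ⟨l • x + v, hx, by simp [smul_smul, hl0.ne']⟩
    exact (isCompact_unitCube.image (by fun_prop)).isBounded.subset this
  · intro b hb hb'
    filter_upwards [eventually_ge_atTop 1] with N hN
    have h1 := (zadorConst_rpow_le_quantPow hd hp hN).trans
      (quantPow_restrict_le_of_mapsTo hp.le hl0 v measurableSet_unitCube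
        (B := B) (fun x hx => hx) N)
    have hl' : 0 < l ^ ((d : ℝ) + p) := by positivity
    rw [mul_comm (ENNReal.ofReal _) (quantPow p N _),
      ← ENNReal.div_le_iff_le_mul (by simp [hl']) (by simp),
      ← ENNReal.ofReal_div_of_pos hl'] at h1
    refine le_trans (ENNReal.ofReal_le_ofReal ?_) h1
    have h2 : b ^ (1 + p / d) ≤ (quantCoeff p d * (volume B).toReal) ^ (1 + p / d) :=
      rpow_le_rpow hb.le hb'.le (by positivity)
    rw [mul_rpow (quantCoeff_pos hd hp).le ENNReal.toReal_nonneg, quantCoeff_rpow hp, hvolB,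
      ← rpow_natCast, ← rpow_neg hl0.le, ← rpow_mul hl0.le,
      show -(d : ℝ) * (1 + p / d) = -(d + p) by field_simp, rpow_neg hl0.le] at h2
    calc b ^ (1 + p / d) * (N : ℝ) ^ (-(p / d))
        ≤ zadorConst p d ^ p * (l ^ ((d : ℝ) + p))⁻¹ * (N : ℝ) ^ (-(p / d)) := by gcongr
      _ = _ := by ring

lemma quantLB_volume_restrict (hd : 1 ≤ d) (hp : 0 < p) {E : Set (Euc d)}
    (hE : MeasurableSet E) (hEb : Bornology.IsBounded E) :
    QuantLB p (p / d) (volume.restrict E) (quantCoeff p d * (volume E).toReal) := by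
  have hd0 : (0 : ℝ) < d := by exact_mod_cast hd
  obtain ⟨B, hEB, hB, hBb, hLB⟩ := exists_quantLB_volume_restrict_superset hd hp hEb
  have hUB := quantUB_volume_restrict hd hp (hB.diff hE) (hBb.subset Set.sdiff_subset)
  refine QuantLB.of_add hp.le (by positivity)
    (mul_nonneg (quantCoeff_pos hd hp).le ENNReal.toReal_nonneg) ?_ hUB
  rw [← mul_add, ← ENNReal.toReal_add hEb.measure_lt_top.ne
    (hBb.subset Set.sdiff_subset).measure_lt_top.ne,
    measure_add_sdiff hE.nullMeasurableSet, Set.union_eq_self_of_subset_left hEB,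
    ← Measure.restrict_union Set.disjoint_sdiff_right (hB.diff hE), Set.union_sdiff_cancel hEB]
  exact hLB

end Lebesgue

section Density

variable {d : ℕ} {p : ℝ}

lemma momentMass_withDensity_simpleFunc_ne_top {t : ℝ} (ht : 0 ≤ t) {B : Set (Euc d)}
    (hB : MeasurableSet B) (hBb : Bornology.IsBounded B) (f : SimpleFunc (Euc d) NNReal) :
    momentMass t ((volume.restrict B).withDensity fun x => f x) ≠ ⊤ := by
  obtain ⟨R, hR⟩ := hBb.exists_norm_le
  obtain ⟨C, hC⟩ := f.exists_forall_le
  have hfin : ∫⁻ x in B, f x ≠ ⊤ := by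
    have hle : ∫⁻ x in B, (f x : ENNReal) ≤ ∫⁻ _ in B, (C : ENNReal) :=
      lintegral_mono fun x => ENNReal.coe_le_coe.2 (hC x)
    rw [setLIntegral_const] at hle
    exact (hle.trans_lt (ENNReal.mul_lt_top ENNReal.coe_lt_top hBb.measure_lt_top)).ne
  have : IsFiniteMeasure ((volume.restrict B).withDensity fun x => (f x : ENNReal)) :=
    isFiniteMeasure_withDensity hfin
  exact momentMass_ne_top_of_bounded ht
    ((withDensity_absolutelyContinuous _ _).ae_le (ae_restrict_of_forall_mem hB hR))

lemma withDensity_mutuallySingular_of_disjoint_support {α : Type*} [MeasurableSpace α]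
    (μ : Measure α) {f g : α → ENNReal} (hf : Measurable f)
    (hfg : Disjoint (Function.support f) (Function.support g)) :
    (μ.withDensity f).MutuallySingular (μ.withDensity g) := by
  have hs : MeasurableSet (Function.support f) := hf (measurableSet_singleton 0).compl
  refine ⟨(Function.support f)ᶜ, hs.compl, ?_, ?_⟩
  · rw [withDensity_apply _ hs.compl, setLIntegral_congr_fun hs.compl (g := 0)]
    · simp
    · intro x hx
      simpa using hx
  · rw [compl_compl, withDensity_apply _ hs, setLIntegral_congr_fun hs (g := 0)]
    · simp
    · intro x hx
      simpa using Set.disjoint_left.1 hfg hx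

lemma quantUB_quantLB_withDensity_simpleFunc (hd : 1 ≤ d) (hp : 0 < p) {B : Set (Euc d)}
    (hB : MeasurableSet B) (hBb : Bornology.IsBounded B) (f : SimpleFunc (Euc d) NNReal) :
    ∫⁻ x in B, (f x : ENNReal) ^ (1 / (1 + p / d)) ≠ ⊤ ∧
    QuantUB p (p / d) ((volume.restrict B).withDensity fun x => f x)
      (quantCoeff p d * (∫⁻ x in B, (f x : ENNReal) ^ (1 / (1 + p / d))).toReal) ∧
    QuantLB p (p / d) ((volume.restrict B).withDensity fun x => f x)
      (quantCoeff p d * (∫⁻ x in B, (f x : ENNReal) ^ (1 / (1 + p / d))).toReal) := by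
  have hd0 : (0 : ℝ) < d := by exact_mod_cast hd
  have hr0 : 0 < p / d := by positivity
  have hq0 : 0 < 1 / (1 + p / d) := by positivity
  have hκ := (quantCoeff_pos hd hp).le
  induction f using SimpleFunc.induction with
  | const c hs =>
    rename_i s
    have hsb : Bornology.IsBounded (s ∩ B) := hBb.subset Set.inter_subset_right
    have h1 : ((volume.restrict B).withDensity fun x => ((SimpleFunc.piecewise s hs
        (SimpleFunc.const _ c) (SimpleFunc.const _ 0) : SimpleFunc (Euc d) NNReal) x : ENNReal))
        = c • volume.restrict (s ∩ B) := by
      have : (fun x => ((SimpleFunc.piecewise s hs (SimpleFunc.const _ c)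
          (SimpleFunc.const _ 0) : SimpleFunc (Euc d) NNReal) x : ENNReal))
          = s.indicator fun _ => (c : ENNReal) := by
        funext x
        by_cases hx : x ∈ s <;> simp [hx]
      rw [this, withDensity_indicator hs, withDensity_const, Measure.restrict_restrict hs]
      rfl
    have h2 : ∫⁻ x in B, ((SimpleFunc.piecewise s hs (SimpleFunc.const _ c)
        (SimpleFunc.const _ 0) : SimpleFunc (Euc d) NNReal) x : ENNReal) ^ (1 / (1 + p / d))
        = (c : ENNReal) ^ (1 / (1 + p / d)) * volume (s ∩ B) := by
      have : (fun x => ((SimpleFunc.piecewise s hs (SimpleFunc.const _ c)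
          (SimpleFunc.const _ 0) : SimpleFunc (Euc d) NNReal) x : ENNReal) ^ (1 / (1 + p / d)))
          = s.indicator fun _ => (c : ENNReal) ^ (1 / (1 + p / d)) := by
        funext x
        by_cases hx : x ∈ s <;> simp [hx, ENNReal.zero_rpow_of_pos hq0, -one_div]
      rw [this, lintegral_indicator_const hs, Measure.restrict_apply hs]
    have h3 : quantCoeff p d * ((c : ENNReal) ^ (1 / (1 + p / d)) * volume (s ∩ B)).toReal
        = (c : ℝ) ^ (1 / (1 + p / d)) * (quantCoeff p d * (volume (s ∩ B)).toReal) := by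
      rw [ENNReal.toReal_mul, ← ENNReal.toReal_rpow, ENNReal.coe_toReal]
      ring
    rw [h1, h2, h3]
    exact ⟨ENNReal.mul_ne_top (ENNReal.rpow_ne_top_of_nonneg hq0.le ENNReal.coe_ne_top)
        hsb.measure_lt_top.ne,
      (quantUB_volume_restrict hd hp (hs.inter hB) hsb).smul hr0 (by positivity) c,
      (quantLB_volume_restrict hd hp (hs.inter hB) hsb).smul hr0 c⟩
  | add hfg hf hg =>
    rename_i f g
    obtain ⟨hf0, hfU, hfL⟩ := hf
    obtain ⟨hg0, hgU, hgL⟩ := hg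
    have hfm : Measurable fun x => (f x : ENNReal) := f.measurable.coe_nnreal_ennreal
    have hsupp : Disjoint (Function.support fun x => (f x : ENNReal))
        (Function.support fun x => (g x : ENNReal)) := by
      have hcoe : ∀ u : SimpleFunc (Euc d) NNReal,
          (Function.support fun x => (u x : ENNReal)) = Function.support u := fun u => by
        ext x; simp
      rwa [hcoe, hcoe]
    have h1 : ((volume.restrict B).withDensity fun x => ((f + g) x : ENNReal))
        = (volume.restrict B).withDensity (fun x => (f x : ENNReal))
          + (volume.restrict B).withDensity fun x => (g x : ENNReal) := by
      rw [← withDensity_add_left hfm]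
      congr 1
    have h2 : ∫⁻ x in B, ((f + g) x : ENNReal) ^ (1 / (1 + p / d))
        = (∫⁻ x in B, (f x : ENNReal) ^ (1 / (1 + p / d)))
          + ∫⁻ x in B, (g x : ENNReal) ^ (1 / (1 + p / d)) := by
      rw [← lintegral_add_left (hfm.pow_const _)]
      refine lintegral_congr fun x => ?_
      by_cases hx : f x = 0
      · simp [hx, ENNReal.zero_rpow_of_pos hq0, -one_div]
      · have hgx : g x = 0 := by
          by_contra hgx
          exact Set.disjoint_left.1 hfg hx hgx
        simp [hgx, ENNReal.zero_rpow_of_pos hq0, -one_div]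
    rw [h1, h2, ENNReal.toReal_add hf0 hg0, mul_add]
    refine ⟨ENNReal.add_ne_top.2 ⟨hf0, hg0⟩,
      hfU.add hp.le hr0 (by positivity) (by positivity) hgU, ?_⟩
    exact hfL.add hd hp one_pos
      (momentMass_withDensity_simpleFunc_ne_top (by positivity) hB hBb f)
      (momentMass_withDensity_simpleFunc_ne_top (by positivity) hB hBb g)
      (withDensity_mutuallySingular_of_disjoint_support _ hfm hsupp) hgL

lemma exists_monotone_approx_quantUB_quantLB (hd : 1 ≤ d) (hp : 0 < p) {g : Euc d → ENNReal}
    (hg : Measurable g) : ∃ G : ℕ → Euc d → ENNReal, Monotone G ∧ (∀ n, Measurable (G n)) ∧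
      (∀ x, Tendsto (fun n => G n x) atTop (nhds (g x))) ∧ ∀ n,
        ∫⁻ x, G n x ^ (1 / (1 + p / d)) ≠ ⊤ ∧
        QuantUB p (p / d) (volume.withDensity (G n))
          (quantCoeff p d * (∫⁻ x, G n x ^ (1 / (1 + p / d))).toReal) ∧
        QuantLB p (p / d) (volume.withDensity (G n))
          (quantCoeff p d * (∫⁻ x, G n x ^ (1 / (1 + p / d))).toReal) := by
  have hq0 : 0 < 1 / (1 + p / d) := by positivity
  set B : ℕ → Set (Euc d) := fun n => Metric.closedBall 0 n with hB
  have hBm : ∀ n, MeasurableSet (B n) := fun n => Metric.isClosed_closedBall.measurableSet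
  refine ⟨fun n => (B n).indicator (SimpleFunc.eapprox g n), ?_, ?_, ?_, ?_⟩
  · intro m n hmn
    refine (Set.indicator_mono (SimpleFunc.monotone_eapprox g hmn)).trans ?_
    exact Set.indicator_le_indicator_of_subset
      (Metric.closedBall_subset_closedBall (by exact_mod_cast hmn)) (fun _ => zero_le)
  · exact fun n => (SimpleFunc.measurable _).indicator (hBm n)
  · intro x
    refine (SimpleFunc.tendsto_eapprox hg x).congr' ?_
    filter_upwards [eventually_ge_atTop ⌈‖x‖⌉₊] with n hn
    rw [Set.indicator_of_mem]
    simpa [hB] using Nat.ceil_le.1 hn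
  · intro n
    have h := quantUB_quantLB_withDensity_simpleFunc hd hp (hBm n) Metric.isBounded_closedBall
      ((SimpleFunc.eapprox g n).map ENNReal.toNNReal)
    have h1 : ∀ x, (((SimpleFunc.eapprox g n).map ENNReal.toNNReal x : NNReal) : ENNReal)
        = SimpleFunc.eapprox g n x := fun x => by
      rw [SimpleFunc.map_apply, ENNReal.coe_toNNReal (SimpleFunc.eapprox_lt_top g n x).ne]
    have h2 : ∫⁻ x, (B n).indicator (SimpleFunc.eapprox g n) x ^ (1 / (1 + p / d))
        = ∫⁻ x in B n, SimpleFunc.eapprox g n x ^ (1 / (1 + p / d)) := by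
      rw [← lintegral_indicator (hBm n)]
      refine lintegral_congr fun x => ?_
      by_cases hx : x ∈ B n <;> simp [hx, ENNReal.zero_rpow_of_pos hq0, -one_div]
    simp only [h1] at h
    simp only [withDensity_indicator (hBm n), h2]
    exact h

lemma quantUB_quantLB_withDensity (hd : 1 ≤ d) {η : ℝ} (hp : 0 < p) (hη : 0 < η)
    {g : Euc d → ENNReal} (hg : Measurable g)
    (hmom : momentMass (p + η) (volume.withDensity g) ≠ ⊤) :
    ∫⁻ x, g x ^ (1 / (1 + p / d)) ≠ ⊤ ∧
    QuantUB p (p / d) (volume.withDensity g)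
      (quantCoeff p d * (∫⁻ x, g x ^ (1 / (1 + p / d))).toReal) ∧
    QuantLB p (p / d) (volume.withDensity g)
      (quantCoeff p d * (∫⁻ x, g x ^ (1 / (1 + p / d))).toReal) := by
  have hd0 : (0 : ℝ) < d := by exact_mod_cast hd
  have hr0 : 0 < p / d := by positivity
  have hq0 : 0 < 1 / (1 + p / d) := by positivity
  have hκ := quantCoeff_pos hd hp
  obtain ⟨C, hC, hCW⟩ := exists_quantUB_of_momentMass_le (d := d) hd hp hη
  obtain ⟨G, hGmono, hGm, hGlim, hG⟩ := exists_monotone_approx_quantUB_quantLB hd hp hg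
  have hGle : ∀ n, G n ≤ g := fun n x =>
    (show Monotone fun n => G n x from fun _ _ h => hGmono h x).ge_of_tendsto (hGlim x) n
  have hlimI : Tendsto (fun n => ∫⁻ x, G n x ^ (1 / (1 + p / d))) atTop
      (nhds (∫⁻ x, g x ^ (1 / (1 + p / d)))) := by
    refine lintegral_tendsto_of_tendsto_of_monotone (fun n => ((hGm n).pow_const _).aemeasurable)
      (Eventually.of_forall fun x m n hmn => ENNReal.rpow_le_rpow (hGmono hmn x) hq0.le)
      (Eventually.of_forall fun x => ?_)
    exact (ENNReal.continuous_rpow_const.tendsto _).comp (hGlim x)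
  have hlimM : Tendsto (fun n => momentMass (p + η) (volume.withDensity (G n))) atTop
      (nhds (momentMass (p + η) (volume.withDensity g))) := by
    simp only [momentMass, lintegral_withDensity_eq_lintegral_mul _ (hGm _)
      (measurable_momentWeight _), lintegral_withDensity_eq_lintegral_mul _ hg
      (measurable_momentWeight _)]
    refine lintegral_tendsto_of_tendsto_of_monotone
      (fun n => ((hGm n).mul (measurable_momentWeight _)).aemeasurable)
      (Eventually.of_forall fun x m n hmn => mul_le_mul_left (hGmono hmn x) _)
      (Eventually.of_forall fun x => ?_)
    exact ENNReal.Tendsto.mul_const (hGlim x) (Or.inr ENNReal.ofReal_ne_top)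
  have hLB : ∀ n, QuantLB p (p / d) (volume.withDensity g)
      (quantCoeff p d * (∫⁻ x, G n x ^ (1 / (1 + p / d))).toReal) := fun n =>
    (hG n).2.2.mono_measure (withDensity_mono (Eventually.of_forall (hGle n)))
  have hfin : ∫⁻ x, g x ^ (1 / (1 + p / d)) ≠ ⊤ := by
    have hUB := hCW _ _ ENNReal.toReal_nonneg (ENNReal.ofReal_toReal hmom).ge
    set U := C * (momentMass (p + η) (volume.withDensity g)).toReal ^ (1 / (1 + p / d))
    refine (lt_of_le_of_lt (le_of_tendsto' hlimI fun n => ?_)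
      (ENNReal.ofReal_lt_top (r := U / quantCoeff p d))).ne
    rw [ENNReal.le_ofReal_iff_toReal_le (hG n).1 (by positivity), le_div_iff₀ hκ, mul_comm]
    exact (hLB n).le_of_quantUB hr0 hUB (by positivity)
  have hlimR : Tendsto (fun n => quantCoeff p d * (∫⁻ x, G n x ^ (1 / (1 + p / d))).toReal) atTop
      (nhds (quantCoeff p d * (∫⁻ x, g x ^ (1 / (1 + p / d))).toReal)) :=
    ((ENNReal.tendsto_toReal hfin).comp hlimI).const_mul _
  refine ⟨hfin, QuantUB.of_forall_lt fun b hb => ?_, QuantLB.of_forall_lt fun b hb => ?_⟩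
  · set I := ∫⁻ x, g x ^ (1 / (1 + p / d))
    set δ := b - quantCoeff p d * I.toReal with hδ
    have hδ0 : 0 < δ := sub_pos.2 hb
    set W := (δ / C) ^ (1 + p / d) with hW
    have hW0 : 0 < W := by positivity
    have hCWδ : C * W ^ (1 / (1 + p / d)) = δ := by
      rw [hW, ← rpow_mul (by positivity), mul_one_div_cancel (by positivity), rpow_one]
      field_simp
    have hsplit : ∀ n, volume.withDensity g
        = volume.withDensity (G n) + volume.withDensity (g - G n) := fun n => by
      rw [← withDensity_add_left (hGm n), add_tsub_cancel_of_le (hGle n)]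
    have hres : ∀ᶠ n in atTop, momentMass (p + η) (volume.withDensity (g - G n))
        ≤ ENNReal.ofReal W := by
      have hsub := ENNReal.Tendsto.sub (tendsto_const_nhds
        (x := momentMass (p + η) (volume.withDensity g))) hlimM (Or.inl hmom)
      rw [tsub_self] at hsub
      filter_upwards [hsub.eventually (gt_mem_nhds (ENNReal.ofReal_pos.2 hW0))] with n hn
      have hadd : momentMass (p + η) (volume.withDensity g)
          = momentMass (p + η) (volume.withDensity (G n))
            + momentMass (p + η) (volume.withDensity (g - G n)) := by
        rw [hsplit n, momentMass, lintegral_add_measure]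
        rfl
      refine le_trans (le_of_eq ?_) hn.le
      refine ENNReal.eq_sub_of_add_eq' hmom ?_
      rw [hadd, add_comm]
    obtain ⟨n, hn⟩ := hres.exists
    have hUB := (hG n).2.1.add hp.le hr0 (by positivity) (by positivity) (hCW _ _ hW0.le hn)
    rw [← hsplit n, hCWδ] at hUB
    refine hUB.mono ?_
    have : quantCoeff p d * (∫⁻ x, G n x ^ (1 / (1 + p / d))).toReal ≤ quantCoeff p d * I.toReal :=
      mul_le_mul_of_nonneg_left (ENNReal.toReal_mono hfin (lintegral_mono fun x =>
        ENNReal.rpow_le_rpow (hGle n x) hq0.le)) hκ.le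
    linarith
  · obtain ⟨n, hn⟩ := (hlimR.eventually (lt_mem_nhds hb)).exists
    exact (hLB n).mono hn.le

end Density

section Limit

variable {d : ℕ} {p r : ℝ} {μ : Measure (Euc d)} {a : ℝ}

lemma QuantUB.tendsto_of_quantLB (hr : 0 < r) (ha0 : 0 ≤ a) (hU : QuantUB p r μ a)
    (hL : QuantLB p r μ a) (hfin : ∀ N : ℕ, 1 ≤ N → quantPow p N μ ≠ ⊤) :
    Tendsto (fun N : ℕ => (N : ℝ) ^ r * (quantPow p N μ).toReal) atTop (nhds (a ^ (1 + r))) := by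
  have hr1 : 0 < 1 + r := by linarith
  refine tendsto_order.2 ⟨fun c hc => ?_, fun c hc => ?_⟩
  · rcases lt_or_ge c 0 with hc0 | hc0
    · exact Eventually.of_forall fun N => hc0.trans_le (by positivity)
    rw [← rpow_inv_lt_iff_of_pos hc0 ha0 hr1] at hc
    obtain ⟨b, hcb, hba⟩ := exists_between hc
    have hb0 : 0 < b := (by positivity : (0 : ℝ) ≤ _).trans_lt hcb
    rw [rpow_inv_lt_iff_of_pos hc0 hb0.le hr1] at hcb
    filter_upwards [hL b hb0 hba, eventually_ge_atTop 1] with N hN hN1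
    have hN0 : (0 : ℝ) < N := by exact_mod_cast hN1
    rw [ENNReal.ofReal_le_iff_le_toReal (hfin N hN1), rpow_neg hN0.le,
      mul_inv_le_iff₀ (by positivity), mul_comm _ ((N : ℝ) ^ r)] at hN
    exact hcb.trans_le hN
  · have hc0 : 0 < c := (by positivity : (0 : ℝ) ≤ _).trans_lt hc
    rw [gt_iff_lt, ← lt_rpow_inv_iff_of_pos ha0 hc0.le hr1] at hc
    obtain ⟨b, hab, hbc⟩ := exists_between hc
    have hb0 : 0 ≤ b := ha0.trans hab.le
    rw [lt_rpow_inv_iff_of_pos hb0 hc0.le hr1] at hbc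
    filter_upwards [hU b hab, eventually_ge_atTop 1] with N hN hN1
    have hN0 : (0 : ℝ) < N := by exact_mod_cast hN1
    rw [ENNReal.le_ofReal_iff_toReal_le (hfin N hN1) (by positivity), rpow_neg hN0.le,
      ← div_eq_mul_inv, le_div_iff₀ (by positivity), mul_comm _ ((N : ℝ) ^ r)] at hN
    exact hN.trans_lt hbc

lemma tendsto_rpow_mul_optQuantErrM (hd : 1 ≤ d) {η : ℝ} (hp : 0 < p) (hη : 0 < η)
    (hμ0 : μ ≠ 0) (hmom : momentMass (p + η) μ ≠ ⊤) {g : Euc d → ENNReal} (hg : Measurable g)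
    {ν : Measure (Euc d)} (hν : ν.MutuallySingular volume)
    (hdec : μ = volume.withDensity g + ν) :
    Tendsto (fun N : ℕ => (N : ℝ) ^ (1 / (d : ℝ)) * optQuantErrM p N μ) atTop
      (nhds (zadorConst p d * (∫⁻ x, g x ^ ((d : ℝ) / ((d : ℝ) + p))).toReal
        ^ (((d : ℝ) + p) / ((d : ℝ) * p)))) := by
  have hd0 : (0 : ℝ) < d := by exact_mod_cast hd
  have hr0 : 0 < p / d := by positivity
  have hmono : ∀ ρ, ρ ≤ μ → momentMass (p + η) ρ ≠ ⊤ := fun ρ hρ =>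
    ((lintegral_mono' hρ le_rfl).trans_lt hmom.lt_top).ne
  have hle : volume.withDensity g ≤ μ := hdec ▸ Measure.le_add_right le_rfl
  have hνle : ν ≤ μ := hdec ▸ Measure.le_add_left le_rfl
  obtain ⟨-, hU, hL⟩ := quantUB_quantLB_withDensity hd hp hη hg (hmono _ hle)
  have hq : (d : ℝ) / (d + p) = 1 / (1 + p / d) := by field_simp
  rw [hq]
  set I := (∫⁻ x, g x ^ (1 / (1 + p / d))).toReal
  have hκ := quantCoeff_pos hd hp
  have hU' := hU.add hp.le hr0 (by positivity) le_rfl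
    (quantUB_zero_of_mutuallySingular hd hp hη (hmono _ hνle) hν)
  rw [add_zero, ← hdec] at hU'
  have hlim := (hU'.tendsto_of_quantLB hr0 (by positivity) (hL.mono_measure hle) fun N hN =>
    quantPow_ne_top hp (by linarith) hmom hN).rpow_const (p := 1 / p) (Or.inr (by positivity))
  have hval : ((quantCoeff p d * I) ^ (1 + p / d)) ^ (1 / p)
      = zadorConst p d * I ^ (((d : ℝ) + p) / ((d : ℝ) * p)) := by
    have hI : 0 ≤ I := ENNReal.toReal_nonneg
    have hZ : 0 ≤ zadorConst p d := zadorConst_nonneg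
    rw [mul_rpow hκ.le hI, quantCoeff_rpow hp, mul_rpow (by positivity) (by positivity),
      ← rpow_mul hZ, ← rpow_mul hI, mul_one_div_cancel hp.ne', rpow_one]
    congr 2
    field_simp
  rw [hval] at hlim
  refine hlim.congr' ?_
  filter_upwards [eventually_ge_atTop 1] with N hN
  exact (rpow_mul_optQuantErrM_eq hd hp (by linarith) hmom hμ0 hN).symm

end Limit

/-- **Zador's Theorem.** Let `p, η > 0` and `X` an ℝ^d-valued random vector with
`E|X|^{p+η} < ∞` whose law decomposes as `h·λ_d + ν` with `ν ⟂ λ_d`.  Then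
`N^{1/d} e_{p,N}(X) → J̃_{p,d} · (∫ h^{d/(d+p)} dλ_d)^{(d+p)/(dp)}` as `N → ∞`,
where `J̃_{p,d} ∈ (0,∞)`. -/
theorem zador (d : ℕ) (hd : 1 ≤ d) (p η : ℝ) (hp : 0 < p) (hη : 0 < η)
    (Ω : Type*) [MeasurableSpace Ω] (P : Measure Ω) [IsProbabilityMeasure P]
    (X : Ω → Euc d) (hXm : Measurable X)
    (hmom : Integrable (fun ω => ‖X ω‖ ^ (p + η)) P)
    (h : Euc d → ℝ) (hh : Measurable h) (hh0 : ∀ x, 0 ≤ h x)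
    (ν : Measure (Euc d)) (hν : ν.MutuallySingular (volume : Measure (Euc d)))
    (hdec : P.map X
      = (volume : Measure (Euc d)).withDensity (fun x => ENNReal.ofReal (h x)) + ν) :
    0 < zadorConst p d ∧
      Tendsto (fun N : ℕ => (N : ℝ) ^ (1 / (d : ℝ)) * optQuantErrM p N (P.map X)) atTop
        (nhds (zadorConst p d *
          (∫ x, h x ^ ((d : ℝ) / ((d : ℝ) + p))) ^ (((d : ℝ) + p) / ((d : ℝ) * p)))) := by
  have hmom' : momentMass (p + η) (P.map X) ≠ ⊤ := by
    rw [momentMass, lintegral_map (measurable_momentWeight _) hXm]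
    exact ((integrable_const 1).add hmom).lintegral_lt_top.ne
  have : IsProbabilityMeasure (P.map X) := Measure.isProbabilityMeasure_map hXm.aemeasurable
  refine ⟨zadorConst_pos hd hp, ?_⟩
  have hint : ∫ x, h x ^ ((d : ℝ) / ((d : ℝ) + p))
      = (∫⁻ x, ENNReal.ofReal (h x) ^ ((d : ℝ) / ((d : ℝ) + p))).toReal := by
    rw [integral_eq_lintegral_of_nonneg_ae (Eventually.of_forall fun x => rpow_nonneg (hh0 x) _)
      (hh.pow_const _).aestronglyMeasurable]
    congr 1
    exact lintegral_congr fun x => (ENNReal.ofReal_rpow_of_nonneg (hh0 x) (by positivity)).symm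
  rw [hint]
  exact tendsto_rpow_mul_optQuantErrM hd hp hη (IsProbabilityMeasure.ne_zero _) hmom'
    hh.ennreal_ofReal hν hdec
end
end

section
/- Let r ∈ [2,∞) and h₀ > 0. Let Z be an ℝ^q-valued random vector with E|Z|^r < ∞ and E[Z] = 0, and let a ∈ ℝ^d, A ∈ M(d,q,ℝ). Then for every h ∈ (0, h₀): E|a + √h·A Z|^r ≤ |a|^r (1 + c_r^{(1)} h) + c^{(2)}_{r,h₀} h ‖A‖^r E|Z|^r, where c_r^{(1)} = 2^{(r−3)₊}(r−1)(r−2)/2, c^{(2)}_{r,h₀} = 2^{(r−3)₊}(r−1)(1 + (r/2)h₀^{r/2−1}), and ‖A‖ is the operator norm of A. -/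
open MeasureTheory Real

noncomputable section

def c₁ (r : ℝ) : ℝ := 2 ^ (max (r - 3) 0) * ((r - 1) * (r - 2) / 2)

def c₂ (r h₀ : ℝ) : ℝ := 2 ^ (max (r - 3) 0) * (r - 1) * (1 + r / 2 * h₀ ^ (r / 2 - 1))

/-- Second-order Taylor bound on `[0, 1]`: if `g'' ≤ M` then `g 1 ≤ g 0 + g' 0 + M / 2`. -/
lemma le_taylor_of_second_deriv_le {g g' g'' : ℝ → ℝ} {M : ℝ}
    (hg : ∀ t, HasDerivAt g (g' t) t) (hg' : ∀ t, HasDerivAt g' (g'' t) t)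
    (hM : ∀ t ∈ Set.Icc (0 : ℝ) 1, g'' t ≤ M) : g 1 ≤ g 0 + g' 0 + M / 2 := by
  have h1 : ∀ t ∈ Set.Icc (0 : ℝ) 1, g' t ≤ g' 0 + M * t := by
    refine image_le_of_deriv_right_le_deriv_boundary (f' := g'') (B' := fun _ => M)
      (fun t _ => (hg' t).continuousAt.continuousWithinAt)
      (fun t _ => (hg' t).hasDerivWithinAt) (by simp) (by fun_prop) (fun t _ => ?_)
      (fun t ht => hM t ⟨ht.1, ht.2.le⟩)
    simpa using (((hasDerivAt_id t).const_mul M).const_add (g' 0)).hasDerivWithinAt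
  have h2 : ∀ t ∈ Set.Icc (0 : ℝ) 1, g t ≤ g 0 + g' 0 * t + M / 2 * t ^ 2 := by
    refine image_le_of_deriv_right_le_deriv_boundary (f' := g') (B' := fun t => g' 0 + M * t)
      (fun t _ => (hg t).continuousAt.continuousWithinAt)
      (fun t _ => (hg t).hasDerivWithinAt) (by simp) (by fun_prop) (fun t _ => ?_)
      (fun t ht => h1 t ⟨ht.1, ht.2.le⟩)
    have := ((((hasDerivAt_id t).const_mul (g' 0)).const_add (g 0)).add
      (((hasDerivAt_id t).pow 2).const_mul (M / 2)))
    refine (this.congr_deriv ?_).hasDerivWithinAt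
    simp
    ring
  simpa using h2 1 (by simp)

lemma add_rpow_le_two_rpow_mul {x y m : ℝ} (hx : 0 ≤ x) (hy : 0 ≤ y) (hm : 0 ≤ m) :
    (x + y) ^ m ≤ 2 ^ (max (m - 1) 0) * (x ^ m + y ^ m) := by
  lift x to NNReal using hx
  lift y to NNReal using hy
  rcases le_total m 1 with h | h
  · rw [max_eq_right (by linarith), rpow_zero, one_mul]
    exact_mod_cast NNReal.rpow_add_le_add_rpow x y hm h
  · rw [max_eq_left (by linarith)]
    exact_mod_cast NNReal.rpow_add_le_mul_rpow_add_rpow x y h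

/-- Regularised Taylor bound for `x ↦ (‖x‖² + ε) ^ (r / 2)`. -/
lemma norm_sq_add_rpow_le {E : Type*} [NormedAddCommGroup E] [InnerProductSpace ℝ E]
    {r ε : ℝ} (hr : 2 ≤ r) (hε : 0 < ε) (a u : E) :
    (‖a + u‖ ^ 2 + ε) ^ (r / 2) ≤ (‖a‖ ^ 2 + ε) ^ (r / 2)
      + r * (‖a‖ ^ 2 + ε) ^ (r / 2 - 1) * inner ℝ a u
      + r * (r - 1) / 2 * ‖u‖ ^ 2 * (2 ^ (max (r - 3) 0)
        * (√(‖a‖ ^ 2 + ε) ^ (r - 2) + ‖u‖ ^ (r - 2))) := by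
  set b : ℝ := inner ℝ a u with hb
  set p : ℝ → ℝ := fun t => ‖a‖ ^ 2 + ε + 2 * b * t + ‖u‖ ^ 2 * t ^ 2 with hp
  have hpn (t : ℝ) : p t = ‖a + t • u‖ ^ 2 + ε := by
    rw [norm_add_sq_real, real_inner_smul_right, norm_smul, mul_pow, norm_eq_abs, sq_abs]
    simp only [hp, hb]
    ring
  have hpos (t : ℝ) : 0 < p t := by rw [hpn]; positivity
  have hpd (t : ℝ) : HasDerivAt p (2 * b + 2 * ‖u‖ ^ 2 * t) t := by
    have := (((hasDerivAt_id t).const_mul (2 * b)).const_add (‖a‖ ^ 2 + ε)).add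
      (((hasDerivAt_id t).pow 2).const_mul (‖u‖ ^ 2))
    refine this.congr_deriv ?_
    simp
    ring
  have hpd' (t : ℝ) : HasDerivAt (fun t => 2 * b + 2 * ‖u‖ ^ 2 * t) (2 * ‖u‖ ^ 2) t := by
    simpa using ((hasDerivAt_id t).const_mul (2 * ‖u‖ ^ 2)).const_add (2 * b)
  have hcs : |b| ≤ ‖a‖ * ‖u‖ := abs_real_inner_le_norm a u
  have hcs2 : b ^ 2 ≤ ‖a‖ ^ 2 * ‖u‖ ^ 2 := by
    rw [← mul_pow, ← sq_abs b]
    gcongr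
  have key := le_taylor_of_second_deriv_le (g := fun t => p t ^ (r / 2))
    (M := r * (r - 1) * ‖u‖ ^ 2 * (2 ^ (max (r - 3) 0)
        * (√(‖a‖ ^ 2 + ε) ^ (r - 2) + ‖u‖ ^ (r - 2))))
    (fun t => (hpd t).rpow_const (Or.inl (hpos t).ne'))
    (fun t => ((hpd' t).mul_const (r / 2)).mul
      ((hpd t).rpow_const (p := r / 2 - 1) (Or.inl (hpos t).ne'))) ?_
  · have e1 : p 1 = ‖a + u‖ ^ 2 + ε := by simpa using hpn 1
    have e0 : p 0 = ‖a‖ ^ 2 + ε := by simpa using hpn 0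
    simp only [e1, e0] at key
    linarith
  · intro t ht
    have hQ : p t ^ (r / 2 - 1) ≤ 2 ^ (max (r - 3) 0)
        * (√(‖a‖ ^ 2 + ε) ^ (r - 2) + ‖u‖ ^ (r - 2)) := by
      have hs : ‖a‖ ≤ √(‖a‖ ^ 2 + ε) := le_sqrt_of_sq_le (by linarith)
      have hsq : √(‖a‖ ^ 2 + ε) ^ 2 = ‖a‖ ^ 2 + ε := sq_sqrt (by positivity)
      have h1 : p t ≤ (√(‖a‖ ^ 2 + ε) + ‖u‖) ^ 2 := by
        have h2 : b * t ≤ √(‖a‖ ^ 2 + ε) * ‖u‖ := by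
          calc b * t ≤ |b| * t := by gcongr; exacts [ht.1, le_abs_self b]
            _ ≤ |b| * 1 := by gcongr; exact ht.2
            _ ≤ ‖a‖ * ‖u‖ := by linarith
            _ ≤ _ := by gcongr
        have h3 : ‖u‖ ^ 2 * t ^ 2 ≤ ‖u‖ ^ 2 * 1 := by
          gcongr
          exact pow_le_one₀ ht.1 ht.2
        simp only [hp]
        nlinarith
      calc p t ^ (r / 2 - 1) ≤ ((√(‖a‖ ^ 2 + ε) + ‖u‖) ^ 2) ^ (r / 2 - 1) :=
            rpow_le_rpow (hpos t).le h1 (by linarith)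
        _ = (√(‖a‖ ^ 2 + ε) + ‖u‖) ^ (r - 2) := by
            rw [← rpow_natCast, ← rpow_mul (by positivity)]
            congr 1
            push_cast
            ring
        _ ≤ _ := by
            have := add_rpow_le_two_rpow_mul (sqrt_nonneg (‖a‖ ^ 2 + ε)) (norm_nonneg u)
              (show 0 ≤ r - 2 by linarith)
            rwa [show r - 2 - 1 = r - 3 by ring] at this
    have hsplit : p t ^ (r / 2 - 1) = p t ^ (r / 2 - 1 - 1) * p t := by
      rw [← rpow_add_one (hpos t).ne']
      congr 1
      ring
    have hdisc : (2 * b + 2 * ‖u‖ ^ 2 * t) ^ 2 ≤ 4 * ‖u‖ ^ 2 * p t := by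
      simp only [hp]
      nlinarith [mul_nonneg (sq_nonneg ‖u‖) hε.le]
    refine le_trans ?_ (mul_le_mul_of_nonneg_left hQ
      (mul_nonneg (mul_nonneg (by linarith) (by linarith)) (sq_nonneg _)))
    have hk : 0 ≤ r / 2 * (r / 2 - 1) * p t ^ (r / 2 - 1 - 1) :=
      mul_nonneg (mul_nonneg (by linarith) (by linarith)) (rpow_nonneg (hpos t).le _)
    have := mul_le_mul_of_nonneg_left hdisc hk
    rw [hsplit]
    nlinarith

lemma norm_add_rpow_le {E : Type*} [NormedAddCommGroup E] [InnerProductSpace ℝ E]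
    {r : ℝ} (hr : 2 ≤ r) (a u : E) :
    ‖a + u‖ ^ r ≤ ‖a‖ ^ r + r * ‖a‖ ^ (r - 2) * inner ℝ a u
      + r * (r - 1) / 2 * ‖u‖ ^ 2 * (2 ^ (max (r - 3) 0)
        * (‖a‖ ^ (r - 2) + ‖u‖ ^ (r - 2))) := by
  have hpow (x : E) (s : ℝ) : (‖x‖ ^ 2 + 0) ^ (s / 2) = ‖x‖ ^ s := by
    rw [add_zero, ← rpow_natCast, ← rpow_mul (norm_nonneg x)]
    congr 1
    push_cast
    ring
  have c1 : Continuous fun x : ℝ => x ^ (r / 2) := continuous_rpow_const (by linarith)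
  have c2 : Continuous fun x : ℝ => x ^ (r / 2 - 1) := continuous_rpow_const (by linarith)
  have c3 : Continuous fun x : ℝ => x ^ (r - 2) := continuous_rpow_const (by linarith)
  have hadd (x : E) : Continuous fun ε : ℝ => ‖x‖ ^ 2 + ε := by fun_prop
  have hL : Continuous fun ε : ℝ => (‖a + u‖ ^ 2 + ε) ^ (r / 2) := c1.comp (hadd _)
  have hR : Continuous fun ε : ℝ => (‖a‖ ^ 2 + ε) ^ (r / 2)
      + r * (‖a‖ ^ 2 + ε) ^ (r / 2 - 1) * inner ℝ a u
      + r * (r - 1) / 2 * ‖u‖ ^ 2 * (2 ^ (max (r - 3) 0)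
        * (√(‖a‖ ^ 2 + ε) ^ (r - 2) + ‖u‖ ^ (r - 2))) :=
    ((c1.comp (hadd a)).add ((continuous_const.mul (c2.comp (hadd a))).mul continuous_const)).add
      (continuous_const.mul (continuous_const.mul
        ((c3.comp (continuous_sqrt.comp (hadd a))).add continuous_const)))
  have := le_of_tendsto_of_tendsto
    ((hL.tendsto 0).mono_left (nhdsWithin_le_nhds (s := Set.Ioi 0)))
    ((hR.tendsto 0).mono_left (nhdsWithin_le_nhds (s := Set.Ioi 0)))
    (by
      filter_upwards [self_mem_nhdsWithin] with ε hε
      exact norm_sq_add_rpow_le hr hε a u)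
  rw [hpow, hpow, show r / 2 - 1 = (r - 2) / 2 by ring, hpow, add_zero,
    sqrt_sq (norm_nonneg a)] at this
  exact this

lemma rpow_sub_two_mul_sq_le {r x y : ℝ} (hr : 2 ≤ r) (hx : 0 ≤ x) (hy : 0 ≤ y) :
    x ^ (r - 2) * y ^ 2 ≤ (r - 2) / r * x ^ r + 2 / r * y ^ r := by
  have h0 : 0 < r := by linarith
  have := geom_mean_le_arith_mean2_weighted (w₁ := (r - 2) / r) (w₂ := 2 / r)
    (div_nonneg (by linarith) h0.le) (by positivity) (rpow_nonneg hx r) (rpow_nonneg hy r)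
    (by field_simp; ring)
  rwa [← rpow_mul hx, ← rpow_mul hy, mul_div_cancel₀ _ h0.ne', mul_div_cancel₀ _ h0.ne',
    rpow_two] at this

lemma norm_add_sqrt_smul_rpow_le {E : Type*} [NormedAddCommGroup E] [InnerProductSpace ℝ E]
    {r h₀ h : ℝ} (hr : 2 ≤ r) (hh : h ∈ Set.Ioo 0 h₀) (a w : E) :
    ‖a + √h • w‖ ^ r ≤ ‖a‖ ^ r * (1 + c₁ r * h) + r * ‖a‖ ^ (r - 2) * √h * inner ℝ a w
      + c₂ r h₀ * h * ‖w‖ ^ r := by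
  have h0 : 0 < r := by linarith
  have hpos : 0 < h := hh.1
  have hw : 0 ≤ ‖w‖ := norm_nonneg w
  have main := norm_add_rpow_le hr a (√h • w)
  have hn : ‖√h • w‖ = √h * ‖w‖ := by
    rw [norm_smul, norm_of_nonneg (sqrt_nonneg h)]
  have hww : ‖w‖ ^ 2 * ‖w‖ ^ (r - 2) = ‖w‖ ^ r := by
    rw [← rpow_two, ← rpow_add_of_nonneg hw (by norm_num) (by linarith)]
    congr 1
    ring
  have hsh : √h ^ (r - 2) ≤ h₀ ^ (r / 2 - 1) := by
    rw [sqrt_eq_rpow, ← rpow_mul hpos.le, show 1 / 2 * (r - 2) = r / 2 - 1 by ring]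
    exact rpow_le_rpow hpos.le hh.2.le (by linarith)
  have young := rpow_sub_two_mul_sq_le hr (norm_nonneg a) hw
  rw [real_inner_smul_right, hn, mul_pow, sq_sqrt hpos.le, mul_rpow (sqrt_nonneg h) hw] at main
  have hK : 0 ≤ 2 ^ (max (r - 3) 0) * (r * (r - 1) / 2) * h :=
    mul_nonneg (mul_nonneg (by positivity) (div_nonneg (mul_nonneg h0.le (by linarith))
      (by norm_num))) hpos.le
  have step : ‖a‖ ^ (r - 2) * ‖w‖ ^ 2 + √h ^ (r - 2) * (‖w‖ ^ 2 * ‖w‖ ^ (r - 2))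
      ≤ (r - 2) / r * ‖a‖ ^ r + 2 / r * ‖w‖ ^ r + h₀ ^ (r / 2 - 1) * ‖w‖ ^ r := by
    rw [hww]
    gcongr
  have := mul_le_mul_of_nonneg_left step hK
  have e : 2 ^ (max (r - 3) 0) * (r * (r - 1) / 2) * h
      * ((r - 2) / r * ‖a‖ ^ r + 2 / r * ‖w‖ ^ r + h₀ ^ (r / 2 - 1) * ‖w‖ ^ r)
      = ‖a‖ ^ r * (c₁ r * h) + c₂ r h₀ * h * ‖w‖ ^ r := by
    unfold c₁ c₂
    field_simp
    ring
  rw [e] at this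
  linarith

lemma c₂_nonneg {r h₀ : ℝ} (hr : 2 ≤ r) (hh₀ : 0 < h₀) : 0 ≤ c₂ r h₀ := by
  have h1 : 0 ≤ r - 1 := by linarith
  have h2 : 0 ≤ r := by linarith
  unfold c₂
  positivity

/-- Let `r ∈ [2,∞)` and `h₀ > 0`. Let `Z` be an ℝ^q-valued random vector with `E|Z|^r < ∞`
and `E[Z] = 0`, and let `a ∈ ℝ^d`, `A ∈ M(d,q,ℝ)` (acting as a linear map, `‖A‖` the operator
norm). Then for every `h ∈ (0, h₀)`:
`E|a + √h·A Z|^r ≤ |a|^r (1 + c_r^{(1)} h) + c^{(2)}_{r,h₀} h ‖A‖^r E|Z|^r`. -/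
theorem moment_bound_affine_gaussian_type (d q : ℕ) (r h₀ h : ℝ) (hr : 2 ≤ r) (hh₀ : 0 < h₀)
    (hh : h ∈ Set.Ioo 0 h₀)
    (Ω : Type*) [MeasurableSpace Ω] (P : Measure Ω) [IsProbabilityMeasure P]
    (Z : Ω → Euc q) (hZmeas : Measurable Z) (hZint : Integrable Z P)
    (hZr : Integrable (fun ω => ‖Z ω‖ ^ r) P) (hZ0 : ∫ ω, Z ω ∂P = 0)
    (a : Euc d) (A : Euc q →L[ℝ] Euc d) :
    ∫ ω, ‖a + Real.sqrt h • A (Z ω)‖ ^ r ∂P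
      ≤ ‖a‖ ^ r * (1 + c₁ r * h) + c₂ r h₀ * h * ‖A‖ ^ r * ∫ ω, ‖Z ω‖ ^ r ∂P := by
  have hA : Integrable (fun ω => A (Z ω)) P := A.integrable_comp hZint
  have hinner : Integrable (fun ω => (inner ℝ a (A (Z ω)) : ℝ)) P := hA.const_inner a
  have hzero : ∫ ω, (inner ℝ a (A (Z ω)) : ℝ) ∂P = 0 := by
    rw [integral_inner hA, A.integral_comp_comm hZint, hZ0, map_zero, inner_zero_right]
  have i1 : Integrable (fun ω => ‖a‖ ^ r * (1 + c₁ r * h)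
      + r * ‖a‖ ^ (r - 2) * √h * inner ℝ a (A (Z ω))) P :=
    (integrable_const _).add (hinner.const_mul _)
  have i2 : Integrable (fun ω => c₂ r h₀ * h * ‖A‖ ^ r * ‖Z ω‖ ^ r) P := hZr.const_mul _
  calc ∫ ω, ‖a + √h • A (Z ω)‖ ^ r ∂P
      ≤ ∫ ω, (‖a‖ ^ r * (1 + c₁ r * h) + r * ‖a‖ ^ (r - 2) * √h * inner ℝ a (A (Z ω))
        + c₂ r h₀ * h * ‖A‖ ^ r * ‖Z ω‖ ^ r) ∂P := by
        refine integral_mono_of_nonneg (.of_forall fun ω => by positivity) (i1.add i2)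
          (.of_forall fun ω => ?_)
        refine (norm_add_sqrt_smul_rpow_le hr hh a (A (Z ω))).trans ?_
        have hle : ‖A (Z ω)‖ ^ r ≤ ‖A‖ ^ r * ‖Z ω‖ ^ r := by
          rw [← mul_rpow (norm_nonneg _) (norm_nonneg _)]
          exact rpow_le_rpow (norm_nonneg _) (A.le_opNorm _) (by linarith)
        have := mul_le_mul_of_nonneg_left hle (mul_nonneg (c₂_nonneg hr hh₀) hh.1.le)
        dsimp only
        linarith
    _ = _ := by
        rw [integral_add i1 i2, integral_add (integrable_const _) (hinner.const_mul _),
          integral_const_mul (c₂ r h₀ * h * ‖A‖ ^ r),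
          integral_const_mul (r * ‖a‖ ^ (r - 2) * √h), hzero]
        simp
end
end
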